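/- arXiv:1410.1168 — 2 statements merged into one kernel-verified Lean document; each statement's English description precedes it below -/
import Mathlib

section
/- Let φ and ψ be holomorphic self-maps of B_N, and suppose there exist ζ_1, ζ_2 ∈ ∂B_N and ω ∈ ∂B_N such that φ has restricted limit ω at ζ_1, ψ has restricted limit ω at ζ_2, and the angular derivatives A_φ(ζ_1) and A_ψ(ζ_2) exist. Then on H^2(B_N), and on A^2_s(B_N) for s > −1, one has lim_{r→1⁻} ⟨C_ψ* k_{rζ_2}, C_φ* k_{rζ_1}⟩ = ( 2/(d_φ(ζ_1) + d_ψ(ζ_2)) )^t > 0, where t = N for H^2(B_N) and t = N+s+1 for A^2_s(B_N). Equivalently, lim_{r→1⁻} ((1−r^2)/(1−⟨φ(rζ_1), ψ(rζ_2)⟩))^t = (2/(d_φ(ζ_1)+d_ψ(ζ_2)))^t. -/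
/-!
Write `d = d_φ(ζ)` and `Q(z) = (1 - ‖φ z‖) / (1 - ‖z‖)`. In the Schwarz–Pick inequality between `w`
and `z`, let `w → ζ` along points where `Q(w)` is close to `d`. Since
`1 - ‖φ z‖ ≤ |1 - ⟨φ z, φ w⟩|`, this gives `Q(rζ) ≤ 2d / (1 + r)` without knowing where `φ w`
accumulates; hence `Q(rζ) → d`, and `d > 0` (take `r = 0`). Now `w = sζ`, `s → 1`, is an admissible
choice for which `φ w → ω`, so Julia's inequality holds at `ω`:
`|1 - ⟨φ(rζ), ω⟩| / (1 - r) ≤ 2d / (1 + r)`. The real part of the quotient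
`(1 - ⟨φ(rζ), ω⟩) / (1 - r)` is at least `Q(rζ)`, so it is squeezed to `d`, and
`‖φ(rζ) - ω‖² = o(1 - r)`. Expanding around `ω`,
`1 - ⟨φ, ψ⟩ = (1 - ⟨φ, ω⟩) + (1 - ⟨ω, ψ⟩) - ⟨φ - ω, ψ - ω⟩`,
which after division by `1 - r` tends to `d_φ(ζ₁) + d_ψ(ζ₂)`.
-/

open Filter MeasureTheory Metric Set
open scoped ComplexInnerProductSpace Topology

noncomputable section

/-- Borel measurable structure on `ℂ^N`. -/
instance (N : ℕ) : MeasurableSpace (EuclideanSpace ℂ (Fin N)) := borel _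

instance (N : ℕ) : BorelSpace (EuclideanSpace ℂ (Fin N)) := ⟨rfl⟩

/-- The open unit ball `B_N` of `ℂ^N`. -/
abbrev Ball (N : ℕ) : Set (EuclideanSpace ℂ (Fin N)) := Metric.ball 0 1

/-- An abstract presentation of a reproducing-kernel Hilbert space of holomorphic functions on
the unit ball `B_N` with reproducing kernel `K_w(z) = (1 - ⟨z,w⟩)^{-t}`.  For `t = N` this is
the Hardy space `H²(B_N)`; for `t = N + s + 1` (`s > -1`) it is the weighted Bergman space
`A²_s(B_N)`.  Injectivity of evaluation forces the kernels to be total, so such a structure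
determines the space uniquely up to canonical unitary equivalence. -/
structure BallKernelSpace (N : ℕ) (t : ℝ) where
  (H : Type)
  [grp : NormedAddCommGroup H]
  [ips : InnerProductSpace ℂ H]
  [cpl : CompleteSpace H]
  eval : H → EuclideanSpace ℂ (Fin N) → ℂ
  eval_add : ∀ f g : H, ∀ z, eval (f + g) z = eval f z + eval g z
  eval_smul : ∀ (c : ℂ) (f : H) (z : EuclideanSpace ℂ (Fin N)), eval (c • f) z = c * eval f z
  holo : ∀ f : H, DifferentiableOn ℂ (eval f) (Ball N)
  eval_injective : ∀ f g : H, (∀ z ∈ Ball N, eval f z = eval g z) → f = g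
  kernel : EuclideanSpace ℂ (Fin N) → H
  eval_kernel : ∀ w ∈ Ball N, ∀ z ∈ Ball N, eval (kernel w) z = (1 - ⟪w, z⟫) ^ (-(t : ℂ))
  reproducing : ∀ (f : H), ∀ w ∈ Ball N, ⟪kernel w, f⟫ = eval f w

attribute [instance] BallKernelSpace.grp BallKernelSpace.ips BallKernelSpace.cpl

/-- `T` is the composition operator `C_φ : f ↦ f ∘ φ` on `S`. -/
def BallKernelSpace.IsCompositionOperator {N : ℕ} {t : ℝ} (S : BallKernelSpace N t)
    (φ : EuclideanSpace ℂ (Fin N) → EuclideanSpace ℂ (Fin N)) (T : S.H →L[ℂ] S.H) : Prop :=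
  ∀ f : S.H, ∀ z ∈ Ball N, S.eval (T f) z = S.eval f (φ z)

/-- A restricted `ζ`-curve in the ball: a continuous curve `γ : [0,1) → B_N` with
`γ(t) → ζ` as `t → 1⁻`, which approaches `ζ` non-tangentially in the complex-normal
direction and whose orthogonal part tends to `ζ` faster, in the sense of Rudin. -/
def IsRestrictedCurve {N : ℕ} (ζ : EuclideanSpace ℂ (Fin N)) (γ : ℝ → EuclideanSpace ℂ (Fin N)) :
    Prop :=
  (∀ t ∈ Set.Ico (0 : ℝ) 1, γ t ∈ Ball N) ∧
  ContinuousOn γ (Set.Ico (0 : ℝ) 1) ∧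
  Tendsto γ (𝓝[Set.Ico (0 : ℝ) 1] 1) (𝓝 ζ) ∧
  Tendsto (fun t => ‖γ t - ⟪ζ, γ t⟫ • ζ‖ ^ 2 / (1 - ‖(⟪ζ, γ t⟫ : ℂ)‖ ^ 2))
    (𝓝[Set.Ico (0 : ℝ) 1] 1) (𝓝 0) ∧
  ∃ M : ℝ, ∀ t ∈ Set.Ico (0 : ℝ) 1, ‖ζ - ⟪ζ, γ t⟫ • ζ‖ / (1 - ‖(⟪ζ, γ t⟫ : ℂ)‖) ≤ M

/-- `f` has restricted limit (`R-lim`) `L` at the boundary point `ζ`: `f(γ(t)) → L` as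
`t → 1⁻` along every restricted `ζ`-curve `γ`. -/
def HasRestrictedLimit {N : ℕ} {α : Type*} [TopologicalSpace α]
    (f : EuclideanSpace ℂ (Fin N) → α) (ζ : EuclideanSpace ℂ (Fin N)) (L : α) : Prop :=
  ∀ γ : ℝ → EuclideanSpace ℂ (Fin N), IsRestrictedCurve ζ γ →
    Tendsto (f ∘ γ) (𝓝[Set.Ico (0 : ℝ) 1] 1) (𝓝 L)

/-- The boundary dilation quantity `d_φ(ζ) = liminf_{z → ζ} (1 - |φ(z)|)/(1 - |z|)`. -/
def boundaryDilation {N : ℕ} (φ : EuclideanSpace ℂ (Fin N) → EuclideanSpace ℂ (Fin N))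
    (ζ : EuclideanSpace ℂ (Fin N)) : ℝ :=
  Filter.liminf (fun z => (1 - ‖φ z‖) / (1 - ‖z‖)) (𝓝[Ball N] ζ)

variable {E F G : Type*} [NormedAddCommGroup E] [InnerProductSpace ℂ E]
  [NormedAddCommGroup F] [InnerProductSpace ℂ F] [NormedAddCommGroup G] [InnerProductSpace ℂ G]

section OneSubInner

lemma inner_self_eq_ofReal_norm_sq (x : E) : (⟪x, x⟫ : ℂ) = (‖x‖ : ℂ) ^ 2 :=
  inner_self_eq_norm_sq_to_K x

lemma one_sub_norm_le_re_one_sub_inner {x : E} (hx : ‖x‖ ≤ 1) (y : E) :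
    1 - ‖y‖ ≤ (1 - ⟪x, y⟫).re := by
  have hre : (⟪x, y⟫ : ℂ).re ≤ ‖y‖ := calc
    (⟪x, y⟫ : ℂ).re ≤ ‖(⟪x, y⟫ : ℂ)‖ := Complex.re_le_norm _
    _ ≤ ‖x‖ * ‖y‖ := norm_inner_le_norm x y
    _ ≤ ‖y‖ := mul_le_of_le_one_left (norm_nonneg y) hx
  rw [Complex.sub_re, Complex.one_re]
  linarith

lemma one_sub_norm_le_norm_one_sub_inner {x : E} (hx : ‖x‖ ≤ 1) (y : E) :
    1 - ‖y‖ ≤ ‖1 - ⟪x, y⟫‖ :=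
  (one_sub_norm_le_re_one_sub_inner hx y).trans (Complex.re_le_norm _)

lemma re_one_sub_inner_pos {x y : E} (hx : ‖x‖ ≤ 1) (hy : ‖y‖ < 1) : 0 < (1 - ⟪x, y⟫).re :=
  (sub_pos.mpr hy).trans_le (one_sub_norm_le_re_one_sub_inner hx y)

lemma one_sub_inner_ne_zero {x y : E} (hx : ‖x‖ ≤ 1) (hy : ‖y‖ < 1) : (1 - ⟪x, y⟫ : ℂ) ≠ 0 :=
  fun h ↦ (re_one_sub_inner_pos hx hy).ne' (by rw [h, Complex.zero_re])

lemma one_sub_sq_norm_pos {V : Type*} [SeminormedAddCommGroup V] {x : V} (hx : ‖x‖ < 1) :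
    0 < 1 - ‖x‖ ^ 2 := by
  nlinarith [norm_nonneg x]

end OneSubInner

section BallInvolution

/-- The holomorphic involution of the unit ball exchanging `b` and `0`, used to move points to the
origin in the Schwarz lemma. The usual formula
`(b - P x - s • (x - P x)) / (1 - ⟨x, b⟩)`, with `P` the projection to `ℂ b` and `s = √(1 - ‖b‖²)`,
is rewritten with `(1 - s) / ‖b‖² = 1 / (1 + s)` so as to make sense at `b = 0`. -/
def ballInvolution (b x : E) : E :=
  (1 - ⟪b, x⟫)⁻¹ • ((1 - ⟪b, x⟫ / (1 + (√(1 - ‖b‖ ^ 2) : ℂ))) • b - (√(1 - ‖b‖ ^ 2) : ℂ) • x)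

variable {b x y : E}

lemma ofReal_sqrt_one_sub_sq_norm_sq {V : Type*} [SeminormedAddCommGroup V] {b : V}
    (hb : ‖b‖ < 1) :
    (√(1 - ‖b‖ ^ 2) : ℂ) ^ 2 = 1 - (‖b‖ : ℂ) ^ 2 := by
  exact_mod_cast Real.sq_sqrt (one_sub_sq_norm_pos hb).le

lemma one_add_ofReal_sqrt_ne_zero (u : ℝ) : (1 + (√u : ℂ)) ≠ 0 := by
  exact_mod_cast (add_pos_of_pos_of_nonneg one_pos (Real.sqrt_nonneg u)).ne'

lemma ballInvolution_zero (b : E) : ballInvolution b 0 = b := by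
  simp [ballInvolution]

lemma one_sub_inner_ballInvolution (hb : ‖b‖ < 1) (hx : ‖x‖ < 1) (hy : ‖y‖ < 1) :
    (1 - ⟪ballInvolution b x, ballInvolution b y⟫ : ℂ) =
      (1 - (‖b‖ : ℂ) ^ 2) * (1 - ⟪x, y⟫) / ((1 - ⟪x, b⟫) * (1 - ⟪b, y⟫)) := by
  have hxb := one_sub_inner_ne_zero hx.le hb
  have hby := one_sub_inner_ne_zero hb.le hy
  have hs := ofReal_sqrt_one_sub_sq_norm_sq hb
  have hs1 := one_add_ofReal_sqrt_ne_zero (1 - ‖b‖ ^ 2)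
  have hbb : (⟪b, b⟫ : ℂ) = 1 - (√(1 - ‖b‖ ^ 2) : ℂ) ^ 2 := by
    rw [hs, sub_sub_cancel, inner_self_eq_ofReal_norm_sq]
  simp only [ballInvolution, inner_smul_left, inner_smul_right, inner_sub_left, inner_sub_right,
    map_inv₀, map_sub, map_div₀, map_add, map_one, Complex.conj_ofReal, inner_conj_symm, hbb,
    ← hs]
  field_simp
  ring

lemma one_sub_inner_self_ballInvolution (hb : ‖b‖ < 1) (hx : ‖x‖ < 1) :
    (1 - ⟪b, ballInvolution b x⟫ : ℂ) = (1 - (‖b‖ : ℂ) ^ 2) / (1 - ⟪b, x⟫) := by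
  simpa [ballInvolution_zero] using
    one_sub_inner_ballInvolution hb (norm_zero.trans_lt one_pos) hx

lemma one_sub_sq_norm_ballInvolution (hb : ‖b‖ < 1) (hx : ‖x‖ < 1) :
    1 - ‖ballInvolution b x‖ ^ 2 = (1 - ‖b‖ ^ 2) * (1 - ‖x‖ ^ 2) / ‖1 - ⟪b, x⟫‖ ^ 2 := by
  have h := one_sub_inner_ballInvolution hb hx hx
  have hconj : (1 - ⟪x, b⟫ : ℂ) = (starRingEnd ℂ) (1 - ⟪b, x⟫) := by
    rw [map_sub, map_one, inner_conj_symm]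
  rw [hconj, Complex.conj_mul', inner_self_eq_ofReal_norm_sq, inner_self_eq_ofReal_norm_sq] at h
  exact_mod_cast h

lemma norm_ballInvolution_lt_one (hb : ‖b‖ < 1) (hx : ‖x‖ < 1) : ‖ballInvolution b x‖ < 1 := by
  have hne := norm_pos_iff.mpr (one_sub_inner_ne_zero hb.le hx)
  have hpos : 0 < 1 - ‖ballInvolution b x‖ ^ 2 := by
    rw [one_sub_sq_norm_ballInvolution hb hx]
    exact div_pos (mul_pos (one_sub_sq_norm_pos hb) (one_sub_sq_norm_pos hx)) (pow_pos hne 2)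
  exact (sq_lt_one_iff₀ (norm_nonneg _)).mp (sub_pos.mp hpos)

lemma mapsTo_ballInvolution (hb : ‖b‖ < 1) :
    MapsTo (ballInvolution b) (ball 0 1) (ball 0 1) := fun x hx ↦ by
  rw [mem_ball_zero_iff] at hx ⊢
  exact norm_ballInvolution_lt_one hb hx

lemma ballInvolution_ballInvolution (hb : ‖b‖ < 1) (hx : ‖x‖ < 1) :
    ballInvolution b (ballInvolution b x) = x := by
  have hbx := one_sub_inner_ne_zero hb.le hx
  have hs := ofReal_sqrt_one_sub_sq_norm_sq hb
  have hs1 := one_add_ofReal_sqrt_ne_zero (1 - ‖b‖ ^ 2)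
  have hs0 : (√(1 - ‖b‖ ^ 2) : ℂ) ≠ 0 := by
    exact_mod_cast (Real.sqrt_pos.mpr (one_sub_sq_norm_pos hb)).ne'
  have hden := one_sub_inner_self_ballInvolution hb hx
  have hnum : (⟪b, ballInvolution b x⟫ : ℂ) = 1 - (√(1 - ‖b‖ ^ 2) : ℂ) ^ 2 / (1 - ⟪b, x⟫) := by
    rw [hs, ← hden, sub_sub_cancel]
  rw [ballInvolution, hden, hnum, ← hs, ballInvolution]
  match_scalars
  · field_simp
    ring
  · field_simp

lemma ballInvolution_self (hb : ‖b‖ < 1) : ballInvolution b b = 0 := by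
  simpa only [ballInvolution_zero] using
    ballInvolution_ballInvolution hb (norm_zero.trans_lt one_pos)

lemma differentiableOn_ballInvolution (hb : ‖b‖ < 1) :
    DifferentiableOn ℂ (ballInvolution b) (ball 0 1) := by
  have hinner : Differentiable ℂ (fun x : E ↦ (⟪b, x⟫ : ℂ)) := (innerSL ℂ b).differentiable
  unfold ballInvolution
  refine DifferentiableOn.smul (DifferentiableOn.inv (by fun_prop) fun x hx ↦ ?_) (by fun_prop)
  exact one_sub_inner_ne_zero hb.le (mem_ball_zero_iff.mp hx)

end BallInvolution

section SchwarzPick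

variable {φ : E → F}

theorem schwarzPick_ball (hφ : DifferentiableOn ℂ φ (ball 0 1))
    (hφm : MapsTo φ (ball 0 1) (ball 0 1)) {w z : E} (hw : ‖w‖ < 1) (hz : ‖z‖ < 1) :
    (1 - ‖w‖ ^ 2) * (1 - ‖z‖ ^ 2) / ‖1 - ⟪w, z⟫‖ ^ 2 ≤
      (1 - ‖φ w‖ ^ 2) * (1 - ‖φ z‖ ^ 2) / ‖1 - ⟪φ w, φ z⟫‖ ^ 2 := by
  have hφw : ‖φ w‖ < 1 := mem_ball_zero_iff.mp (hφm (mem_ball_zero_iff.mpr hw))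
  have hφz : ‖φ z‖ < 1 := mem_ball_zero_iff.mp (hφm (mem_ball_zero_iff.mpr hz))
  have hcomp : MapsTo (φ ∘ ballInvolution w) (ball 0 1) (ball 0 1) :=
    hφm.comp (mapsTo_ballInvolution hw)
  have hschwarz : ‖ballInvolution (φ w) (φ z)‖ ≤ ‖ballInvolution w z‖ := by
    have h := Complex.norm_le_norm_of_mapsTo_ball
      (f := ballInvolution (φ w) ∘ φ ∘ ballInvolution w)
      ((differentiableOn_ballInvolution hφw).comp
        (hφ.comp (differentiableOn_ballInvolution hw) (mapsTo_ballInvolution hw)) hcomp)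
      (((mapsTo_ballInvolution hφw).comp hcomp).mono_right ball_subset_closedBall)
      (by simp only [Function.comp_apply, ballInvolution_zero, ballInvolution_self hφw])
      (norm_ballInvolution_lt_one hw hz)
    rwa [Function.comp_apply, Function.comp_apply, ballInvolution_ballInvolution hw hz] at h
  rw [← one_sub_sq_norm_ballInvolution hw hz, ← one_sub_sq_norm_ballInvolution hφw hφz]
  gcongr

end SchwarzPick

section Radial

variable {V : Type*} [SeminormedAddCommGroup V] [NormedSpace ℝ V] {ζ : V} {r : ℝ}

lemma norm_real_smul_of_norm_eq_one (hζ : ‖ζ‖ = 1) (hr : 0 ≤ r) : ‖r • ζ‖ = r := by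
  rw [norm_smul_of_nonneg hr, hζ, mul_one]

lemma inner_real_smul_of_norm_eq_one {ζ : E} (hζ : ‖ζ‖ = 1) (r : ℝ) : (⟪ζ, r • ζ⟫ : ℂ) = r := by
  rw [RCLike.real_smul_eq_coe_smul (K := ℂ), inner_smul_right, inner_self_eq_ofReal_norm_sq, hζ]
  simp

lemma real_smul_mem_ball_of_norm_eq_one (hζ : ‖ζ‖ = 1) (hr : r ∈ Ico (0 : ℝ) 1) :
    r • ζ ∈ ball (0 : V) 1 := by
  rw [mem_ball_zero_iff, norm_real_smul_of_norm_eq_one hζ hr.1]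
  exact hr.2

lemma tendsto_real_smul_nhdsWithin_ball (hζ : ‖ζ‖ = 1) :
    Tendsto (fun r : ℝ ↦ r • ζ) (𝓝[<] 1) (𝓝[ball 0 1] ζ) := by
  have h : Tendsto (fun r : ℝ ↦ r • ζ) (𝓝 1) (𝓝 ζ) :=
    Continuous.tendsto' (by fun_prop) _ _ (one_smul ℝ ζ)
  refine tendsto_nhdsWithin_iff.mpr ⟨h.mono_left nhdsWithin_le_nhds, ?_⟩
  filter_upwards [Ico_mem_nhdsLT zero_lt_one] with r hr
  exact real_smul_mem_ball_of_norm_eq_one hζ hr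

lemma norm_one_sub_ofReal (hr : r ≤ 1) : ‖(1 - r : ℂ)‖ = 1 - r := by
  rw [← Complex.ofReal_one, ← Complex.ofReal_sub, Complex.norm_of_nonneg (sub_nonneg.mpr hr)]

end Radial

section Horofunction

/-- The quantity `|1 - ⟨z, ζ⟩|² / (1 - ‖z‖²)` compared by Julia's inequality; for `‖ζ‖ = 1` its
sublevel sets are the horoballs of the unit ball at `ζ`. -/
def horofunction (ζ z : E) : ℝ := ‖1 - ⟪ζ, z⟫‖ ^ 2 / (1 - ‖z‖ ^ 2)

variable {ζ z : E}

lemma horofunction_zero_right (ζ : E) : horofunction ζ 0 = 1 := by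
  simp [horofunction]

lemma horofunction_nonneg (ζ : E) (hz : ‖z‖ < 1) : 0 ≤ horofunction ζ z :=
  div_nonneg (sq_nonneg _) (one_sub_sq_norm_pos hz).le

lemma horofunction_real_smul (hζ : ‖ζ‖ = 1) {r : ℝ} (hr : r ∈ Ico (0 : ℝ) 1) :
    horofunction ζ (r • ζ) = (1 - r) / (1 + r) := by
  have h1 : 1 - r ≠ 0 := (sub_pos.mpr hr.2).ne'
  have h2 : 1 + r ≠ 0 := (add_pos_of_pos_of_nonneg one_pos hr.1).ne'
  rw [horofunction, inner_real_smul_of_norm_eq_one hζ, norm_one_sub_ofReal hr.2.le,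
    norm_real_smul_of_norm_eq_one hζ hr.1, show 1 - r ^ 2 = (1 - r) * (1 + r) by ring]
  field_simp

lemma norm_one_sub_inner_le_two_mul_horofunction (hζ : ‖ζ‖ ≤ 1) (hz : ‖z‖ < 1) :
    ‖1 - ⟪ζ, z⟫‖ ≤ 2 * horofunction ζ z := by
  have hle := one_sub_norm_le_norm_one_sub_inner hζ z
  rw [horofunction, mul_div_assoc', le_div_iff₀ (one_sub_sq_norm_pos hz)]
  have hsq : 1 - ‖z‖ ^ 2 ≤ 2 * ‖1 - ⟪ζ, z⟫‖ := by nlinarith [sq_nonneg (1 - ‖z‖)]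
  nlinarith [norm_nonneg (1 - ⟪ζ, z⟫ : ℂ)]

lemma tendsto_two_div_mul_horofunction (hζ : ‖ζ‖ = 1) (z : E) :
    Tendsto (fun w ↦ 2 / (1 + ‖w‖) * horofunction w z) (𝓝 ζ) (𝓝 (horofunction ζ z)) := by
  have hnorm : Tendsto (fun w : E ↦ 2 / (1 + ‖w‖)) (𝓝 ζ) (𝓝 1) := by
    have h : ContinuousAt (fun w : E ↦ 2 / (1 + ‖w‖)) ζ :=
      continuousAt_const.div (by fun_prop) (by positivity)
    simpa [ContinuousAt, hζ, one_add_one_eq_two] using h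
  have hhoro : Continuous fun w : E ↦ horofunction w z := by
    unfold horofunction
    fun_prop
  simpa using hnorm.mul (hhoro.tendsto ζ)

end Horofunction

section Dilation

variable {V W : Type*} [SeminormedAddCommGroup V] [SeminormedAddCommGroup W]

/-- The difference quotient `(1 - ‖φ z‖) / (1 - ‖z‖)` whose lower limit at a boundary point is the
boundary dilation of `φ`. -/
def dilationQuotient (φ : V → W) (z : V) : ℝ := (1 - ‖φ z‖) / (1 - ‖z‖)

/-- The boundary dilation `d_φ(ζ)` for maps between arbitrary normed spaces; on `ℂ^N` it is
`boundaryDilation`. It is the true lower limit only under `HasFiniteDilation φ ζ`. -/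
def dilation (φ : V → W) (ζ : V) : ℝ := liminf (dilationQuotient φ) (𝓝[ball 0 1] ζ)

/-- The condition `d_φ(ζ) < ∞`, in the form that makes the real-valued `liminf` meaningful. -/
def HasFiniteDilation (φ : V → W) (ζ : V) : Prop :=
  IsCoboundedUnder (· ≥ ·) (𝓝[ball 0 1] ζ) (dilationQuotient φ)

variable {φ : V → W} {ζ : V}

lemma dilationQuotient_nonneg (hφm : MapsTo φ (ball 0 1) (ball 0 1)) {z : V}
    (hz : z ∈ ball (0 : V) 1) : 0 ≤ dilationQuotient φ z :=
  div_nonneg (sub_nonneg.mpr (mem_ball_zero_iff.mp (hφm hz)).le)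
    (sub_nonneg.mpr (mem_ball_zero_iff.mp hz).le)

lemma isBoundedUnder_dilationQuotient (hφm : MapsTo φ (ball 0 1) (ball 0 1)) (ζ : V) :
    IsBoundedUnder (· ≥ ·) (𝓝[ball 0 1] ζ) (dilationQuotient φ) :=
  isBoundedUnder_of_eventually_ge (a := 0) <|
    eventually_mem_nhdsWithin.mono fun _ hz ↦ dilationQuotient_nonneg hφm hz

lemma dilationQuotient_real_smul [NormedSpace ℝ V] (φ : V → W) (hζ : ‖ζ‖ = 1) {r : ℝ}
    (hr : 0 ≤ r) : dilationQuotient φ (r • ζ) = (1 - ‖φ (r • ζ)‖) / (1 - r) := by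
  rw [dilationQuotient, norm_real_smul_of_norm_eq_one hζ hr]

end Dilation

section JuliaInequality

variable {φ : E → F} {ζ : E}

lemma horofunction_map_le (hφ : DifferentiableOn ℂ φ (ball 0 1))
    (hφm : MapsTo φ (ball 0 1) (ball 0 1)) {w z : E} (hw : ‖w‖ < 1) (hz : ‖z‖ < 1) :
    horofunction (φ w) (φ z) ≤
      dilationQuotient φ w * (2 / (1 + ‖w‖) * horofunction w z) := by
  have hφw : ‖φ w‖ < 1 := mem_ball_zero_iff.mp (hφm (mem_ball_zero_iff.mpr hw))
  have hφz : ‖φ z‖ < 1 := mem_ball_zero_iff.mp (hφm (mem_ball_zero_iff.mpr hz))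
  have hwz := norm_pos_iff.mpr (one_sub_inner_ne_zero hw.le hz)
  have hφwz := norm_pos_iff.mpr (one_sub_inner_ne_zero hφw.le hφz)
  have hw2 := one_sub_sq_norm_pos hw
  have hz2 := one_sub_sq_norm_pos hz
  have hφz2 := one_sub_sq_norm_pos hφz
  have hpick : horofunction (φ w) (φ z) ≤
      (1 - ‖φ w‖ ^ 2) / (1 - ‖w‖ ^ 2) * horofunction w z := by
    have h := schwarzPick_ball hφ hφm hw hz
    rw [div_le_div_iff₀ (by positivity) (by positivity)] at h
    rw [horofunction, horofunction, div_mul_div_comm, div_le_div_iff₀ hφz2 (by positivity)]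
    linarith
  have hquot : (1 - ‖φ w‖ ^ 2) / (1 - ‖w‖ ^ 2) ≤ dilationQuotient φ w * (2 / (1 + ‖w‖)) := by
    have : 0 < 1 - ‖w‖ := sub_pos.mpr hw
    rw [dilationQuotient, div_mul_div_comm, show 1 - ‖w‖ ^ 2 = (1 - ‖w‖) * (1 + ‖w‖) by ring]
    gcongr
    nlinarith [norm_nonneg (φ w)]
  calc horofunction (φ w) (φ z)
      ≤ (1 - ‖φ w‖ ^ 2) / (1 - ‖w‖ ^ 2) * horofunction w z := hpick
    _ ≤ dilationQuotient φ w * (2 / (1 + ‖w‖)) * horofunction w z := by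
        gcongr
        exact horofunction_nonneg w hz
    _ = _ := mul_assoc _ _ _

lemma one_sub_norm_map_le_dilation (hφ : DifferentiableOn ℂ φ (ball 0 1))
    (hφm : MapsTo φ (ball 0 1) (ball 0 1)) (hζ : ‖ζ‖ = 1) (hfin : HasFiniteDilation φ ζ)
    {z : E} (hz : ‖z‖ < 1) :
    1 - ‖φ z‖ ≤ 2 * (dilation φ ζ * horofunction ζ z) := by
  have hφz : ‖φ z‖ < 1 := mem_ball_zero_iff.mp (hφm (mem_ball_zero_iff.mpr hz))
  have hbound (D : ℝ) (hD : dilation φ ζ < D) : 1 - ‖φ z‖ ≤ 2 * (D * horofunction ζ z) := by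
    have hlim : Tendsto (fun w ↦ 2 * (D * (2 / (1 + ‖w‖) * horofunction w z))) (𝓝[ball 0 1] ζ)
        (𝓝 (2 * (D * horofunction ζ z))) :=
      (((tendsto_two_div_mul_horofunction hζ z).const_mul D).const_mul 2).mono_left
        nhdsWithin_le_nhds
    refine ge_of_tendsto_of_frequently hlim ?_
    refine ((frequently_lt_of_liminf_lt hfin hD).and_eventually self_mem_nhdsWithin).mono ?_
    rintro w ⟨hwD, hwb⟩
    have hw : ‖w‖ < 1 := mem_ball_zero_iff.mp hwb
    have hφw : ‖φ w‖ < 1 := mem_ball_zero_iff.mp (hφm hwb)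
    calc 1 - ‖φ z‖ ≤ ‖1 - ⟪φ w, φ z⟫‖ := one_sub_norm_le_norm_one_sub_inner hφw.le _
      _ ≤ 2 * horofunction (φ w) (φ z) := norm_one_sub_inner_le_two_mul_horofunction hφw.le hφz
      _ ≤ 2 * (dilationQuotient φ w * (2 / (1 + ‖w‖) * horofunction w z)) := by
          gcongr
          exact horofunction_map_le hφ hφm hw hz
      _ ≤ 2 * (D * (2 / (1 + ‖w‖) * horofunction w z)) := by
          have := horofunction_nonneg w hz
          gcongr
  have hcont : Tendsto (fun D ↦ 2 * (D * horofunction ζ z)) (𝓝[>] dilation φ ζ)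
      (𝓝 (2 * (dilation φ ζ * horofunction ζ z))) :=
    (Continuous.tendsto (by fun_prop) _).mono_left nhdsWithin_le_nhds
  exact ge_of_tendsto hcont (eventually_mem_nhdsWithin.mono hbound)

lemma dilation_pos (hφ : DifferentiableOn ℂ φ (ball 0 1))
    (hφm : MapsTo φ (ball 0 1) (ball 0 1)) (hζ : ‖ζ‖ = 1) (hfin : HasFiniteDilation φ ζ) :
    0 < dilation φ ζ := by
  have h0 : ‖φ 0‖ < 1 := mem_ball_zero_iff.mp (hφm (mem_ball_self one_pos))
  have h := one_sub_norm_map_le_dilation hφ hφm hζ hfin (norm_zero.trans_lt one_pos)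
  rw [horofunction_zero_right] at h
  linarith

lemma tendsto_mul_two_div_one_add (d : ℝ) :
    Tendsto (fun r : ℝ ↦ d * (2 / (1 + r))) (𝓝[<] 1) (𝓝 d) := by
  have h : ContinuousAt (fun r : ℝ ↦ d * (2 / (1 + r))) 1 :=
    continuousAt_const.mul (continuousAt_const.div (by fun_prop) (by norm_num))
  have hd : d * (2 / (1 + 1)) = d := by ring
  simpa only [hd] using h.tendsto.mono_left nhdsWithin_le_nhds

theorem tendsto_dilationQuotient_real_smul (hφ : DifferentiableOn ℂ φ (ball 0 1))
    (hφm : MapsTo φ (ball 0 1) (ball 0 1)) (hζ : ‖ζ‖ = 1) (hfin : HasFiniteDilation φ ζ) :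
    Tendsto (fun r : ℝ ↦ dilationQuotient φ (r • ζ)) (𝓝[<] 1) (𝓝 (dilation φ ζ)) := by
  have hupper : ∀ᶠ r : ℝ in 𝓝[<] 1,
      dilationQuotient φ (r • ζ) ≤ dilation φ ζ * (2 / (1 + r)) := by
    filter_upwards [Ico_mem_nhdsLT zero_lt_one] with r hr
    have h := one_sub_norm_map_le_dilation hφ hφm hζ hfin
      (mem_ball_zero_iff.mp (real_smul_mem_ball_of_norm_eq_one hζ hr))
    rw [horofunction_real_smul hζ hr] at h
    rw [dilationQuotient_real_smul φ hζ hr.1, div_le_iff₀ (sub_pos.mpr hr.2)]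
    exact h.trans_eq (by ring)
  refine tendsto_order.mpr ⟨fun c hc ↦ ?_, fun c hc ↦ ?_⟩
  · exact (tendsto_real_smul_nhdsWithin_ball hζ).eventually
      (eventually_lt_of_lt_liminf hc (isBoundedUnder_dilationQuotient hφm ζ))
  · filter_upwards [hupper, (tendsto_mul_two_div_one_add _).eventually_lt_const hc] with r h h'
    exact h.trans_lt h'

theorem julia_inequality (hφ : DifferentiableOn ℂ φ (ball 0 1))
    (hφm : MapsTo φ (ball 0 1) (ball 0 1)) (hζ : ‖ζ‖ = 1) (hfin : HasFiniteDilation φ ζ) {ω : F}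
    (hφω : Tendsto (fun r : ℝ ↦ φ (r • ζ)) (𝓝[<] 1) (𝓝 ω)) {z : E} (hz : ‖z‖ < 1) :
    horofunction ω (φ z) ≤ dilation φ ζ * horofunction ζ z := by
  have hradial := tendsto_real_smul_nhdsWithin_ball hζ
  have hleft : Tendsto (fun r : ℝ ↦ horofunction (φ (r • ζ)) (φ z)) (𝓝[<] 1)
      (𝓝 (horofunction ω (φ z))) := by
    have hcont : Continuous fun η : F ↦ horofunction η (φ z) := by
      unfold horofunction
      fun_prop
    exact (hcont.tendsto ω).comp hφω
  have hright := (tendsto_dilationQuotient_real_smul hφ hφm hζ hfin).mul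
    ((tendsto_two_div_mul_horofunction hζ z).comp (tendsto_nhds_of_tendsto_nhdsWithin hradial))
  refine le_of_tendsto_of_tendsto hleft hright ?_
  filter_upwards [Ico_mem_nhdsLT zero_lt_one] with r hr
  exact horofunction_map_le hφ hφm
    (mem_ball_zero_iff.mp (real_smul_mem_ball_of_norm_eq_one hζ hr)) hz

end JuliaInequality

section AngularDerivative

lemma tendsto_ofReal_of_le_re_of_norm_le {ι : Type*} {l : Filter ι} {u : ι → ℂ} {a b : ι → ℝ}
    {d : ℝ} (hd : 0 ≤ d) (ha : Tendsto a l (𝓝 d)) (hb : Tendsto b l (𝓝 d))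
    (hau : ∀ᶠ i in l, a i ≤ (u i).re) (hub : ∀ᶠ i in l, ‖u i‖ ≤ b i) :
    Tendsto u l (𝓝 (d : ℂ)) := by
  have hsq : Tendsto (fun i ↦ b i ^ 2 - 2 * d * a i + d ^ 2) l (𝓝 0) := by
    have h := ((hb.pow 2).sub (ha.const_mul (2 * d))).add_const (d ^ 2)
    rwa [show d ^ 2 - 2 * d * d + d ^ 2 = 0 by ring] at h
  have hdist : ∀ᶠ i in l, ‖u i - d‖ ≤ √(b i ^ 2 - 2 * d * a i + d ^ 2) := by
    filter_upwards [hau, hub] with i hai hbi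
    refine Real.le_sqrt_of_sq_le ?_
    have hexp : ‖u i - d‖ ^ 2 = ‖u i‖ ^ 2 - 2 * d * (u i).re + d ^ 2 := by
      simp only [Complex.sq_norm, Complex.normSq_apply, Complex.sub_re, Complex.sub_im,
        Complex.ofReal_re, Complex.ofReal_im]
      ring
    rw [hexp]
    gcongr
  rw [tendsto_iff_norm_sub_tendsto_zero]
  refine squeeze_zero' (.of_forall fun i ↦ norm_nonneg _) hdist ?_
  simpa using hsq.sqrt

variable {φ : E → F} {ζ : E} {ω : F}

lemma one_sub_norm_div_le_re_one_sub_inner_div {r : ℝ} (hr : r ≤ 1) (hω : ‖ω‖ ≤ 1) (y : F) :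
    (1 - ‖y‖) / (1 - r) ≤ ((1 - ⟪ω, y⟫) / (1 - r : ℂ)).re := by
  rw [← Complex.ofReal_one, ← Complex.ofReal_sub, Complex.div_ofReal_re, Complex.ofReal_one]
  have : 0 ≤ 1 - r := sub_nonneg.mpr hr
  gcongr
  exact one_sub_norm_le_re_one_sub_inner hω y

lemma hasFiniteDilation_of_tendsto_one_sub_inner_div (hζ : ‖ζ‖ = 1) (hω : ‖ω‖ ≤ 1) {A : ℂ}
    (hA : Tendsto (fun r : ℝ ↦ (1 - ⟪ω, φ (r • ζ)⟫) / (1 - r : ℂ)) (𝓝[<] 1) (𝓝 A)) :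
    HasFiniteDilation φ ζ := by
  refine IsCoboundedUnder.of_frequently_le (a := A.re + 1) <|
    (tendsto_real_smul_nhdsWithin_ball hζ).frequently (Eventually.frequently ?_)
  have hre := ((Complex.continuous_re.tendsto A).comp hA).eventually_le_const (lt_add_one A.re)
  filter_upwards [hre, Ico_mem_nhdsLT zero_lt_one] with r hle hr
  rw [dilationQuotient_real_smul φ hζ hr.1]
  exact (one_sub_norm_div_le_re_one_sub_inner_div hr.2.le hω _).trans hle

theorem tendsto_one_sub_inner_div_dilation (hφ : DifferentiableOn ℂ φ (ball 0 1))
    (hφm : MapsTo φ (ball 0 1) (ball 0 1)) (hζ : ‖ζ‖ = 1) (hω : ‖ω‖ ≤ 1)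
    (hfin : HasFiniteDilation φ ζ)
    (hφω : Tendsto (fun r : ℝ ↦ φ (r • ζ)) (𝓝[<] 1) (𝓝 ω)) :
    Tendsto (fun r : ℝ ↦ (1 - ⟪ω, φ (r • ζ)⟫) / (1 - r : ℂ)) (𝓝[<] 1)
      (𝓝 (dilation φ ζ : ℂ)) := by
  refine tendsto_ofReal_of_le_re_of_norm_le (dilation_pos hφ hφm hζ hfin).le
    (tendsto_dilationQuotient_real_smul hφ hφm hζ hfin) (tendsto_mul_two_div_one_add _) ?_ ?_
  · filter_upwards [Ico_mem_nhdsLT zero_lt_one] with r hr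
    rw [dilationQuotient_real_smul φ hζ hr.1]
    exact one_sub_norm_div_le_re_one_sub_inner_div hr.2.le hω _
  · filter_upwards [Ico_mem_nhdsLT zero_lt_one] with r hr
    have hmem := real_smul_mem_ball_of_norm_eq_one hζ hr
    rw [norm_div, norm_one_sub_ofReal hr.2.le, div_le_iff₀ (sub_pos.mpr hr.2)]
    calc ‖1 - ⟪ω, φ (r • ζ)⟫‖ ≤ 2 * horofunction ω (φ (r • ζ)) :=
          norm_one_sub_inner_le_two_mul_horofunction hω (mem_ball_zero_iff.mp (hφm hmem))
      _ ≤ 2 * (dilation φ ζ * horofunction ζ (r • ζ)) := by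
          gcongr
          exact julia_inequality hφ hφm hζ hfin hφω (mem_ball_zero_iff.mp hmem)
      _ = dilation φ ζ * (2 / (1 + r)) * (1 - r) := by
          rw [horofunction_real_smul hζ hr]
          ring

theorem tendsto_sq_norm_sub_div_zero (hφ : DifferentiableOn ℂ φ (ball 0 1))
    (hφm : MapsTo φ (ball 0 1) (ball 0 1)) (hζ : ‖ζ‖ = 1) (hω : ‖ω‖ = 1)
    (hfin : HasFiniteDilation φ ζ)
    (hφω : Tendsto (fun r : ℝ ↦ φ (r • ζ)) (𝓝[<] 1) (𝓝 ω)) :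
    Tendsto (fun r : ℝ ↦ ‖φ (r • ζ) - ω‖ ^ 2 / (1 - r)) (𝓝[<] 1) (𝓝 0) := by
  have hre := (Complex.continuous_re.tendsto _).comp
    (tendsto_one_sub_inner_div_dilation hφ hφm hζ hω.le hfin hφω)
  have hlim := (hre.const_mul 2).sub
    ((tendsto_dilationQuotient_real_smul hφ hφm hζ hfin).mul (hφω.norm.const_add 1))
  rw [Complex.ofReal_re, hω, show ∀ d : ℝ, 2 * d - d * (1 + 1) = 0 by intro d; ring] at hlim
  refine hlim.congr' ?_
  filter_upwards [Ico_mem_nhdsLT zero_lt_one] with r hr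
  rw [Function.comp_apply, ← Complex.ofReal_one, ← Complex.ofReal_sub, Complex.div_ofReal_re,
    dilationQuotient_real_smul φ hζ hr.1, norm_sub_rev, norm_sub_sq (𝕜 := ℂ), hω,
    RCLike.re_eq_complex_re, Complex.sub_re, Complex.ofReal_re]
  ring

end AngularDerivative

section CrossLimit

variable {φ : E → G} {ψ : F → G} {ζ₁ : E} {ζ₂ : F} {ω : G}

lemma one_sub_inner_eq_of_norm_eq_one (hω : ‖ω‖ = 1) (x y : G) :
    (1 - ⟪x, y⟫ : ℂ) = (1 - ⟪ω, y⟫) + (1 - ⟪x, ω⟫) - ⟪x - ω, y - ω⟫ := by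
  rw [inner_sub_left, inner_sub_right, inner_sub_right, inner_self_eq_ofReal_norm_sq, hω,
    Complex.ofReal_one]
  ring

lemma tendsto_inner_div_zero_of_sq_norm_div {x y : ℝ → G}
    (hx : Tendsto (fun r : ℝ ↦ ‖x r‖ ^ 2 / (1 - r)) (𝓝[<] 1) (𝓝 0))
    (hy : Tendsto (fun r : ℝ ↦ ‖y r‖ ^ 2 / (1 - r)) (𝓝[<] 1) (𝓝 0)) :
    Tendsto (fun r : ℝ ↦ (⟪x r, y r⟫ : ℂ) / (1 - r)) (𝓝[<] 1) (𝓝 0) := by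
  refine squeeze_zero_norm' ?_ (by simpa using hx.add hy)
  filter_upwards [self_mem_nhdsWithin] with r (hr : r < 1)
  rw [norm_div, norm_one_sub_ofReal hr.le, ← add_div]
  have : 0 ≤ 1 - r := sub_nonneg.mpr hr.le
  gcongr
  calc ‖(⟪x r, y r⟫ : ℂ)‖ ≤ ‖x r‖ * ‖y r‖ := norm_inner_le_norm _ _
    _ ≤ ‖x r‖ ^ 2 + ‖y r‖ ^ 2 := by
      nlinarith [two_mul_le_add_sq ‖x r‖ ‖y r‖, mul_nonneg (norm_nonneg (x r)) (norm_nonneg (y r))]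

theorem tendsto_one_sub_inner_map_div (hφ : DifferentiableOn ℂ φ (ball 0 1))
    (hφm : MapsTo φ (ball 0 1) (ball 0 1)) (hψ : DifferentiableOn ℂ ψ (ball 0 1))
    (hψm : MapsTo ψ (ball 0 1) (ball 0 1)) (hζ₁ : ‖ζ₁‖ = 1) (hζ₂ : ‖ζ₂‖ = 1) (hω : ‖ω‖ = 1)
    (hφfin : HasFiniteDilation φ ζ₁) (hψfin : HasFiniteDilation ψ ζ₂)
    (hφω : Tendsto (fun r : ℝ ↦ φ (r • ζ₁)) (𝓝[<] 1) (𝓝 ω))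
    (hψω : Tendsto (fun r : ℝ ↦ ψ (r • ζ₂)) (𝓝[<] 1) (𝓝 ω)) :
    Tendsto (fun r : ℝ ↦ (1 - ⟪ψ (r • ζ₂), φ (r • ζ₁)⟫) / (1 - r : ℂ)) (𝓝[<] 1)
      (𝓝 ((dilation φ ζ₁ + dilation ψ ζ₂ : ℝ) : ℂ)) := by
  have hφlim := tendsto_one_sub_inner_div_dilation hφ hφm hζ₁ hω.le hφfin hφω
  have hψlim : Tendsto (fun r : ℝ ↦ (1 - ⟪ψ (r • ζ₂), ω⟫) / (1 - r : ℂ)) (𝓝[<] 1)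
      (𝓝 (dilation ψ ζ₂ : ℂ)) := by
    have h := (Complex.continuous_conj.tendsto _).comp
      (tendsto_one_sub_inner_div_dilation hψ hψm hζ₂ hω.le hψfin hψω)
    simpa only [Function.comp_def, map_div₀, map_sub, map_one, Complex.conj_ofReal,
      inner_conj_symm] using h
  have hcross := tendsto_inner_div_zero_of_sq_norm_div
    (tendsto_sq_norm_sub_div_zero hψ hψm hζ₂ hω hψfin hψω)
    (tendsto_sq_norm_sub_div_zero hφ hφm hζ₁ hω hφfin hφω)
  rw [← sub_zero ((dilation φ ζ₁ + dilation ψ ζ₂ : ℝ) : ℂ), Complex.ofReal_add]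
  refine ((hφlim.add hψlim).sub hcross).congr fun r ↦ ?_
  rw [one_sub_inner_eq_of_norm_eq_one hω (ψ (r • ζ₂)) (φ (r • ζ₁))]
  ring

theorem tendsto_one_sub_sq_div_one_sub_inner_map (hφ : DifferentiableOn ℂ φ (ball 0 1))
    (hφm : MapsTo φ (ball 0 1) (ball 0 1)) (hψ : DifferentiableOn ℂ ψ (ball 0 1))
    (hψm : MapsTo ψ (ball 0 1) (ball 0 1)) (hζ₁ : ‖ζ₁‖ = 1) (hζ₂ : ‖ζ₂‖ = 1) (hω : ‖ω‖ = 1)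
    (hφfin : HasFiniteDilation φ ζ₁) (hψfin : HasFiniteDilation ψ ζ₂)
    (hφω : Tendsto (fun r : ℝ ↦ φ (r • ζ₁)) (𝓝[<] 1) (𝓝 ω))
    (hψω : Tendsto (fun r : ℝ ↦ ψ (r • ζ₂)) (𝓝[<] 1) (𝓝 ω)) :
    Tendsto (fun r : ℝ ↦ (1 - (r : ℂ) ^ 2) / (1 - ⟪ψ (r • ζ₂), φ (r • ζ₁)⟫)) (𝓝[<] 1)
      (𝓝 ((2 / (dilation φ ζ₁ + dilation ψ ζ₂) : ℝ) : ℂ)) := by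
  have hsum : ((dilation φ ζ₁ + dilation ψ ζ₂ : ℝ) : ℂ) ≠ 0 := by
    exact_mod_cast (add_pos (dilation_pos hφ hφm hζ₁ hφfin) (dilation_pos hψ hψm hζ₂ hψfin)).ne'
  have hnum : Tendsto (fun r : ℝ ↦ 1 + (r : ℂ)) (𝓝[<] 1) (𝓝 2) :=
    (Continuous.tendsto' (by fun_prop) _ _ (by norm_num)).mono_left nhdsWithin_le_nhds
  have hlim := hnum.div
    (tendsto_one_sub_inner_map_div hφ hφm hψ hψm hζ₁ hζ₂ hω hφfin hψfin hφω hψω) hsum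
  rw [Complex.ofReal_div, Complex.ofReal_ofNat]
  refine hlim.congr fun r ↦ ?_
  rw [Pi.div_apply, div_div_eq_mul_div]
  ring

end CrossLimit

section Kernel

lemma ofReal_div_cpow {a : ℝ} (ha : 0 < a) {x : ℂ} (hx : x ∈ Complex.slitPlane) (t : ℂ) :
    ((a : ℂ) / x) ^ t = (a : ℂ) ^ t * x ^ (-t) := by
  have ha0 : (a : ℂ) ≠ 0 := Complex.ofReal_ne_zero.mpr ha.ne'
  have hx0 : x⁻¹ ≠ 0 := inv_ne_zero (Complex.slitPlane_ne_zero hx)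
  rw [Complex.cpow_neg, ← Complex.inv_cpow _ _ (Complex.slitPlane_arg_ne_pi hx), div_eq_mul_inv,
    Complex.cpow_def_of_ne_zero (mul_ne_zero ha0 hx0), Complex.cpow_def_of_ne_zero ha0,
    Complex.cpow_def_of_ne_zero hx0, Complex.log_ofReal_mul ha hx0, Complex.ofReal_log ha.le,
    add_mul, Complex.exp_add]

variable {H : Type*} [NormedAddCommGroup H] [InnerProductSpace ℂ H]

/-- The vectors `k w`, for `w` in the unit ball, reproduce the kernel `(1 - ⟨z, w⟩)^{-t}`. Elements
`f` of `H` are thought of as the functions `w ↦ ⟪k w, f⟫` on the ball. -/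
def IsBallKernel (t : ℝ) (k : E → H) : Prop :=
  ∀ a ∈ ball (0 : E) 1, ∀ b ∈ ball (0 : E) 1, ⟪k a, k b⟫ = (1 - ⟪b, a⟫ : ℂ) ^ (-(t : ℂ))

/-- `T` is the operator of composition with `φ` on the space of functions `w ↦ ⟪k w, f⟫`. -/
def IsKernelComposition {V : Type*} [SeminormedAddCommGroup V] (k : V → H) (φ : V → V)
    (T : H →L[ℂ] H) : Prop :=
  ∀ f : H, ∀ w ∈ ball (0 : V) 1, ⟪k w, T f⟫ = ⟪k (φ w), f⟫

variable {t : ℝ} {k : E → H} {φ ψ : E → E} {a b : E}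

lemma IsKernelComposition.adjoint_apply_kernel {V : Type*} [SeminormedAddCommGroup V]
    [CompleteSpace H] {k : V → H} {φ : V → V} {a : V} {T : H →L[ℂ] H}
    (hT : IsKernelComposition k φ T) (ha : a ∈ ball (0 : V) 1) :
    ContinuousLinearMap.adjoint T (k a) = k (φ a) :=
  ext_inner_right ℂ fun f ↦ by rw [ContinuousLinearMap.adjoint_inner_left, hT f a ha]

lemma IsBallKernel.sq_norm (hk : IsBallKernel t k) (ha : a ∈ ball (0 : E) 1) :
    ‖k a‖ ^ 2 = (1 - ‖a‖ ^ 2) ^ (-t) := by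
  have h := hk a ha a ha
  have hpos := (one_sub_sq_norm_pos (mem_ball_zero_iff.mp ha)).le
  rw [inner_self_eq_ofReal_norm_sq, inner_self_eq_ofReal_norm_sq] at h
  apply Complex.ofReal_injective
  rw [Complex.ofReal_cpow hpos]
  push_cast
  exact h

lemma IsBallKernel.norm_eq_norm (hk : IsBallKernel t k) (ha : a ∈ ball (0 : E) 1)
    (hb : b ∈ ball (0 : E) 1) (hab : ‖a‖ = ‖b‖) : ‖k a‖ = ‖k b‖ := by
  rw [← sq_eq_sq₀ (norm_nonneg _) (norm_nonneg _), hk.sq_norm ha, hk.sq_norm hb, hab]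

lemma IsBallKernel.inner_adjoint_normalized [CompleteSpace H] (hk : IsBallKernel t k)
    {Cφ Cψ : H →L[ℂ] H} (hCφ : IsKernelComposition k φ Cφ) (hCψ : IsKernelComposition k ψ Cψ)
    (hφm : MapsTo φ (ball 0 1) (ball 0 1)) (hψm : MapsTo ψ (ball 0 1) (ball 0 1))
    (ha : a ∈ ball (0 : E) 1) (hb : b ∈ ball (0 : E) 1) (hab : ‖a‖ = ‖b‖) :
    ⟪ContinuousLinearMap.adjoint Cφ ((‖k a‖ : ℂ)⁻¹ • k a),
      ContinuousLinearMap.adjoint Cψ ((‖k b‖ : ℂ)⁻¹ • k b)⟫ =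
      ((1 - (‖a‖ : ℂ) ^ 2) / (1 - ⟪ψ b, φ a⟫)) ^ (t : ℂ) := by
  have hpos := one_sub_sq_norm_pos (mem_ball_zero_iff.mp ha)
  have hslit : (1 - ⟪ψ b, φ a⟫ : ℂ) ∈ Complex.slitPlane :=
    .inl (re_one_sub_inner_pos (mem_ball_zero_iff.mp (hψm hb)).le (mem_ball_zero_iff.mp (hφm ha)))
  have hnorm : (1 - (‖a‖ : ℂ) ^ 2) ^ (t : ℂ) = (‖k a‖ : ℂ)⁻¹ * (‖k a‖ : ℂ)⁻¹ := by
    have h : (1 - ‖a‖ ^ 2) ^ t = (‖k a‖ ^ 2)⁻¹ := by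
      rw [hk.sq_norm ha, Real.rpow_neg hpos.le, inv_inv]
    rw [← mul_inv, ← sq]
    exact_mod_cast (Complex.ofReal_cpow hpos.le t).symm.trans (congrArg Complex.ofReal h)
  have hdiv := ofReal_div_cpow hpos hslit t
  push_cast at hdiv
  rw [map_smul, map_smul, hCφ.adjoint_apply_kernel ha, hCψ.adjoint_apply_kernel hb,
    inner_smul_left, inner_smul_right, hk _ (hφm ha) _ (hψm hb), ← hk.norm_eq_norm ha hb hab,
    map_inv₀, Complex.conj_ofReal, hdiv, hnorm, mul_assoc]

theorem adjoint_kernel_inner_limit_ball_general [CompleteSpace H] (hk : IsBallKernel t k)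
    (hφ : DifferentiableOn ℂ φ (ball 0 1)) (hφm : MapsTo φ (ball 0 1) (ball 0 1))
    (hψ : DifferentiableOn ℂ ψ (ball 0 1)) (hψm : MapsTo ψ (ball 0 1) (ball 0 1))
    {ζ₁ ζ₂ ω : E} (hζ₁ : ‖ζ₁‖ = 1) (hζ₂ : ‖ζ₂‖ = 1) (hω : ‖ω‖ = 1)
    (hφω : Tendsto (fun r : ℝ ↦ φ (r • ζ₁)) (𝓝[<] 1) (𝓝 ω))
    (hψω : Tendsto (fun r : ℝ ↦ ψ (r • ζ₂)) (𝓝[<] 1) (𝓝 ω))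
    (hφfin : HasFiniteDilation φ ζ₁) (hψfin : HasFiniteDilation ψ ζ₂)
    {Cφ Cψ : H →L[ℂ] H} (hCφ : IsKernelComposition k φ Cφ) (hCψ : IsKernelComposition k ψ Cψ) :
    0 < (2 / (dilation φ ζ₁ + dilation ψ ζ₂)) ^ t ∧
    Tendsto
      (fun r : ℝ ↦
        ⟪ContinuousLinearMap.adjoint Cφ ((‖k (r • ζ₁)‖ : ℂ)⁻¹ • k (r • ζ₁)),
          ContinuousLinearMap.adjoint Cψ ((‖k (r • ζ₂)‖ : ℂ)⁻¹ • k (r • ζ₂))⟫)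
      (𝓝[<] (1 : ℝ)) (𝓝 (((2 / (dilation φ ζ₁ + dilation ψ ζ₂)) ^ t : ℝ) : ℂ)) ∧
    Tendsto
      (fun r : ℝ ↦ ((1 - (r : ℂ) ^ 2) / (1 - ⟪ψ (r • ζ₂), φ (r • ζ₁)⟫)) ^ (t : ℂ))
      (𝓝[<] (1 : ℝ)) (𝓝 (((2 / (dilation φ ζ₁ + dilation ψ ζ₂)) ^ t : ℝ) : ℂ)) := by
  have hpos : 0 < 2 / (dilation φ ζ₁ + dilation ψ ζ₂) :=
    div_pos two_pos (add_pos (dilation_pos hφ hφm hζ₁ hφfin) (dilation_pos hψ hψm hζ₂ hψfin))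
  have hpow : Tendsto
      (fun r : ℝ ↦ ((1 - (r : ℂ) ^ 2) / (1 - ⟪ψ (r • ζ₂), φ (r • ζ₁)⟫)) ^ (t : ℂ))
      (𝓝[<] (1 : ℝ)) (𝓝 (((2 / (dilation φ ζ₁ + dilation ψ ζ₂)) ^ t : ℝ) : ℂ)) := by
    rw [Complex.ofReal_cpow hpos.le]
    exact (tendsto_one_sub_sq_div_one_sub_inner_map hφ hφm hψ hψm hζ₁ hζ₂ hω hφfin hψfin hφω
      hψω).cpow tendsto_const_nhds (Complex.ofReal_mem_slitPlane.mpr hpos)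
  refine ⟨Real.rpow_pos_of_pos hpos t, hpow.congr' ?_, hpow⟩
  filter_upwards [Ico_mem_nhdsLT zero_lt_one] with r hr
  have hn₁ := norm_real_smul_of_norm_eq_one hζ₁ hr.1
  have hn₂ := norm_real_smul_of_norm_eq_one hζ₂ hr.1
  rw [hk.inner_adjoint_normalized hCφ hCψ hφm hψm (real_smul_mem_ball_of_norm_eq_one hζ₁ hr)
    (real_smul_mem_ball_of_norm_eq_one hζ₂ hr) (hn₁.trans hn₂.symm), hn₁]

end Kernel

section EuclideanBall

variable {N : ℕ} {φ : EuclideanSpace ℂ (Fin N) → EuclideanSpace ℂ (Fin N)}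
  {ζ ω : EuclideanSpace ℂ (Fin N)}

lemma isRestrictedCurve_real_smul (hζ : ‖ζ‖ = 1) : IsRestrictedCurve ζ (fun r : ℝ ↦ r • ζ) := by
  have hproj (r : ℝ) : (⟪ζ, r • ζ⟫ : ℂ) • ζ = r • ζ := by
    rw [inner_real_smul_of_norm_eq_one hζ, Complex.coe_smul]
  refine ⟨fun r hr ↦ real_smul_mem_ball_of_norm_eq_one hζ hr, by fun_prop, ?_, ?_, 1, ?_⟩
  · rw [nhdsWithin_Ico_eq_nhdsLT zero_lt_one]
    exact tendsto_nhds_of_tendsto_nhdsWithin (tendsto_real_smul_nhdsWithin_ball hζ)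
  · simp only [hproj, sub_self, norm_zero, zero_pow two_ne_zero, zero_div]
    exact tendsto_const_nhds
  · intro r hr
    have hsub : ζ - r • ζ = (1 - r) • ζ := by rw [sub_smul, one_smul]
    rw [hproj, hsub, norm_real_smul_of_norm_eq_one hζ (sub_nonneg.mpr hr.2.le),
      inner_real_smul_of_norm_eq_one hζ, Complex.norm_of_nonneg hr.1]
    exact div_self_le_one _

lemma HasRestrictedLimit.tendsto_real_smul {α : Type*} [TopologicalSpace α]
    {f : EuclideanSpace ℂ (Fin N) → α} {L : α} (hf : HasRestrictedLimit f ζ L) (hζ : ‖ζ‖ = 1) :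
    Tendsto (fun r : ℝ ↦ f (r • ζ)) (𝓝[<] 1) (𝓝 L) := by
  simpa only [nhdsWithin_Ico_eq_nhdsLT zero_lt_one, Function.comp_def] using
    hf _ (isRestrictedCurve_real_smul hζ)

lemma hasFiniteDilation_of_hasRestrictedLimit (hζ : ‖ζ‖ = 1) (hω : ‖ω‖ ≤ 1)
    (hA : ∃ A : ℂ, HasRestrictedLimit (fun z ↦ (1 - ⟪ω, φ z⟫) / (1 - ⟪ζ, z⟫)) ζ A) :
    HasFiniteDilation φ ζ := by
  obtain ⟨A, hA⟩ := hA
  refine hasFiniteDilation_of_tendsto_one_sub_inner_div hζ hω (A := A) ?_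
  simpa only [inner_real_smul_of_norm_eq_one hζ] using hA.tendsto_real_smul hζ

lemma BallKernelSpace.isBallKernel {t : ℝ} (S : BallKernelSpace N t) :
    IsBallKernel t S.kernel := fun a ha b hb ↦ by
  rw [S.reproducing _ a ha, S.eval_kernel b hb a ha]

lemma BallKernelSpace.IsCompositionOperator.isKernelComposition {t : ℝ} {S : BallKernelSpace N t}
    {T : S.H →L[ℂ] S.H} (hT : S.IsCompositionOperator φ T)
    (hφm : MapsTo φ (Ball N) (Ball N)) : IsKernelComposition S.kernel φ T := fun f w hw ↦ by
  rw [S.reproducing _ w hw, hT f w hw, S.reproducing _ _ (hφm hw)]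

end EuclideanBall

/-- Let `φ, ψ` be holomorphic self-maps of `B_N` and `ζ₁, ζ₂, ω ∈ ∂B_N` be
such that `φ` has restricted limit `ω` at `ζ₁`, `ψ` has restricted limit `ω` at `ζ₂`, and the
angular derivatives `A_φ(ζ₁)`, `A_ψ(ζ₂)` exist.  Then on the Hardy space `H²(B_N)` (`t = N`)
and on the weighted Bergman spaces `A²_s(B_N)` (`t = N + s + 1`, `s > -1`) one has
`lim_{r→1⁻} ⟨C_ψ* k_{rζ₂}, C_φ* k_{rζ₁}⟩ = (2/(d_φ(ζ₁) + d_ψ(ζ₂)))^t > 0`;  equivalently,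
`lim_{r→1⁻} ((1-r²)/(1-⟨φ(rζ₁), ψ(rζ₂)⟩))^t = (2/(d_φ(ζ₁) + d_ψ(ζ₂)))^t`. -/
theorem adjoint_kernel_inner_limit_ball
    (N : ℕ) (t : ℝ) (ht : t = N ∨ ∃ s : ℝ, -1 < s ∧ t = N + s + 1)
    (S : BallKernelSpace N t)
    (φ ψ : EuclideanSpace ℂ (Fin N) → EuclideanSpace ℂ (Fin N))
    (hφ : DifferentiableOn ℂ φ (Ball N)) (hφm : Set.MapsTo φ (Ball N) (Ball N))
    (hψ : DifferentiableOn ℂ ψ (Ball N)) (hψm : Set.MapsTo ψ (Ball N) (Ball N))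
    (ζ₁ ζ₂ ω : EuclideanSpace ℂ (Fin N))
    (hζ₁ : ‖ζ₁‖ = 1) (hζ₂ : ‖ζ₂‖ = 1) (hω : ‖ω‖ = 1)
    (hRφ : HasRestrictedLimit φ ζ₁ ω) (hRψ : HasRestrictedLimit ψ ζ₂ ω)
    (hAφ : ∃ A : ℂ, HasRestrictedLimit (fun z => (1 - ⟪ω, φ z⟫) / (1 - ⟪ζ₁, z⟫)) ζ₁ A)
    (hAψ : ∃ A : ℂ, HasRestrictedLimit (fun z => (1 - ⟪ω, ψ z⟫) / (1 - ⟪ζ₂, z⟫)) ζ₂ A)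
    (Cφ Cψ : S.H →L[ℂ] S.H)
    (hCφ : S.IsCompositionOperator φ Cφ) (hCψ : S.IsCompositionOperator ψ Cψ) :
    0 < (2 / (boundaryDilation φ ζ₁ + boundaryDilation ψ ζ₂)) ^ t ∧
    Tendsto
      (fun r : ℝ =>
        ⟪ContinuousLinearMap.adjoint Cφ ((‖S.kernel (r • ζ₁)‖ : ℂ)⁻¹ • S.kernel (r • ζ₁)),
          ContinuousLinearMap.adjoint Cψ ((‖S.kernel (r • ζ₂)‖ : ℂ)⁻¹ • S.kernel (r • ζ₂))⟫)
      (𝓝[<] (1 : ℝ))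
      (𝓝 (((2 / (boundaryDilation φ ζ₁ + boundaryDilation ψ ζ₂)) ^ t : ℝ) : ℂ)) ∧
    Tendsto
      (fun r : ℝ => ((1 - (r : ℂ) ^ 2) / (1 - ⟪ψ (r • ζ₂), φ (r • ζ₁)⟫)) ^ (t : ℂ))
      (𝓝[<] (1 : ℝ))
      (𝓝 (((2 / (boundaryDilation φ ζ₁ + boundaryDilation ψ ζ₂)) ^ t : ℝ) : ℂ)) :=
  adjoint_kernel_inner_limit_ball_general S.isBallKernel hφ hφm hψ hψm hζ₁ hζ₂ hω
    (hRφ.tendsto_real_smul hζ₁) (hRψ.tendsto_real_smul hζ₂)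
    (hasFiniteDilation_of_hasRestrictedLimit hζ₁ hω.le hAφ)
    (hasFiniteDilation_of_hasRestrictedLimit hζ₂ hω.le hAψ)
    (hCφ.isKernelComposition hφm) (hCψ.isKernelComposition hψm)
end
end

section
/- Let φ and ψ be automorphisms of the unit disk D. If the commutator [C_ψ*, C_φ] = C_ψ* C_φ − C_φ C_ψ* is compact on H^2(D), or on A^2_s(D) for some s > −1, then φ∘ψ = ψ∘φ. -/
open Filter MeasureTheory Metric Set
open scoped ComplexInnerProductSpace Topology

noncomputable section

/-- The open unit disk `D` in `ℂ`. -/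
abbrev Disk : Set ℂ := Metric.ball 0 1

/-- An abstract presentation of a reproducing-kernel Hilbert space of holomorphic functions
on the unit disk `D` with reproducing kernel `K_w(z) = (1 - z·conj w)^{-t}`.  For `t = 1`
this is the Hardy space `H²(D)`; for `t = s + 2` (`s > -1`) it is the weighted Bergman space
`A²_s(D)`.  Injectivity of evaluation forces the kernels to be total, so such a structure
determines the space uniquely up to canonical unitary equivalence. -/
structure DiskKernelSpace (t : ℝ) where
  (H : Type)
  [grp : NormedAddCommGroup H]
  [ips : InnerProductSpace ℂ H]
  [cpl : CompleteSpace H]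
  eval : H → ℂ → ℂ
  eval_add : ∀ f g : H, ∀ z, eval (f + g) z = eval f z + eval g z
  eval_smul : ∀ (c : ℂ) (f : H) (z : ℂ), eval (c • f) z = c * eval f z
  holo : ∀ f : H, DifferentiableOn ℂ (eval f) Disk
  eval_injective : ∀ f g : H, (∀ z ∈ Disk, eval f z = eval g z) → f = g
  kernel : ℂ → H
  eval_kernel : ∀ w ∈ Disk, ∀ z ∈ Disk,
    eval (kernel w) z = (1 - z * (starRingEnd ℂ) w) ^ (-(t : ℂ))
  reproducing : ∀ (f : H), ∀ w ∈ Disk, ⟪kernel w, f⟫ = eval f w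

attribute [instance] DiskKernelSpace.grp DiskKernelSpace.ips DiskKernelSpace.cpl

/-- `T` is the composition operator `C_φ : f ↦ f ∘ φ` on `S`. -/
def DiskKernelSpace.IsCompositionOperator {t : ℝ} (S : DiskKernelSpace t)
    (φ : ℂ → ℂ) (T : S.H →L[ℂ] S.H) : Prop :=
  ∀ f : S.H, ∀ z ∈ Disk, S.eval (T f) z = S.eval f (φ z)

/-- `φ` is an automorphism (biholomorphic self-map) of the unit disk `D`. -/
def IsDiskAutomorphism (φ : ℂ → ℂ) : Prop :=
  DifferentiableOn ℂ φ Disk ∧ Set.MapsTo φ Disk Disk ∧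
    ∃ ψ : ℂ → ℂ, DifferentiableOn ℂ ψ Disk ∧ Set.MapsTo ψ Disk Disk ∧
      (∀ z ∈ Disk, ψ (φ z) = z) ∧ (∀ z ∈ Disk, φ (ψ z) = z)

/-!
Write `k_w` for the normalized reproducing kernel, `χ = φ⁻¹` and `η = ψ⁻¹`. If `φ` and `ψ` do not
commute, then `χ` and `η ∘ χ ∘ ψ` have distinct limits at some point `ζ` of the unit circle.

Let `w → ζ` and `v = χ (ψ w)`. For `t ≥ 1` an automorphism `χ` multiplies the space contractively,
and `M_χ* k_w = conj (χ w) • k_w`, so `k_w` is an approximate eigenvector of `M_χ`. Hence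
`M_z C_φ = C_φ M_χ` makes `C_φ k_w` an approximate eigenvector of the contraction `M_z` with
eigenvalue `lim χ w`; likewise for `C_ψ k_v` and `lim η v`. Distinct unimodular eigenvalues of a
contraction have asymptotically orthogonal approximate eigenvectors: `⟪C_ψ k_v, C_φ k_w⟫ → 0`.

Since `k_w → 0` weakly, compactness gives `⟪k_v, [C_ψ*, C_φ] k_w⟫ → 0`. Subtracting,
`⟪C_φ* k_v, C_ψ* k_w⟫ → 0`. But both vectors are multiples of the kernel at `φ v = ψ w`, and their
norms are bounded below.
-/

open scoped ComplexConjugate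

section PositiveSemidefinite

open Matrix
open scoped ComplexOrder

variable {ι 𝕜 E F : Type*} [RCLike 𝕜] [NormedAddCommGroup E] [InnerProductSpace 𝕜 E]
  [NormedAddCommGroup F] [InnerProductSpace 𝕜 F]

lemma finsuppSum_gram_eq_norm_sq (v : ι → E) (x : ι →₀ 𝕜) :
    (x.sum fun i xi ↦ x.sum fun j xj ↦ star xi * gram 𝕜 v i j * xj) =
      (‖Finsupp.linearCombination 𝕜 v x‖ : 𝕜) ^ 2 := by
  simp only [← inner_self_eq_norm_sq_to_K, Finsupp.linearCombination_apply, Finsupp.sum, sum_inner]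
  simp only [inner_sum, inner_smul_left, inner_smul_right, gram_apply, RCLike.star_def]
  exact Finset.sum_congr rfl fun i _ ↦ Finset.sum_congr rfl fun j _ ↦ by ring

lemma gram_posSemidef (v : ι → E) : (gram 𝕜 v).PosSemidef := by
  refine ⟨isHermitian_gram 𝕜 v, fun x ↦ ?_⟩
  rw [finsuppSum_gram_eq_norm_sq]
  exact_mod_cast sq_nonneg ‖Finsupp.linearCombination 𝕜 v x‖

lemma posSemidef_mul_conj (a : ι → 𝕜) : (of fun i j ↦ a i * conj (a j)).PosSemidef := by
  convert! gram_posSemidef (𝕜 := 𝕜) fun i ↦ conj (a i) using 1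
  ext i j
  simp [mul_comm]

lemma posSemidef_of_hasSum {A : ℕ → Matrix ι ι 𝕜} {B : Matrix ι ι 𝕜}
    (hA : ∀ n, (A n).PosSemidef) (hAB : ∀ i j, HasSum (fun n ↦ A n i j) (B i j)) :
    B.PosSemidef := by
  refine ⟨Matrix.ext fun i j ↦ ?_, fun x ↦ ?_⟩
  · have hstar : HasSum (fun n ↦ A n i j) (star (B j i)) := by
      simpa only [(hA _).isHermitian.apply i j] using (hAB j i).star
    exact hstar.unique (hAB i j)
  · have hsum : HasSum (fun n ↦ x.sum fun i xi ↦ x.sum fun j xj ↦ star xi * A n i j * xj)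
        (x.sum fun i xi ↦ x.sum fun j xj ↦ star xi * B i j * xj) :=
      hasSum_sum fun i _ ↦ hasSum_sum fun j _ ↦ ((hAB i j).mul_left _).mul_right _
    exact hsum.nonneg fun n ↦ (hA n).2 x

lemma exists_contraction_of_posSemidef_gram_sub [CompleteSpace F] {v : ι → E} {u : ι → F}
    (hv : (Submodule.span 𝕜 (range v)).topologicalClosure = ⊤)
    (huv : (gram 𝕜 v - gram 𝕜 u).PosSemidef) :
    ∃ A : E →L[𝕜] F, ‖A‖ ≤ 1 ∧ ∀ i, A (v i) = u i := by
  set V := Finsupp.linearCombination 𝕜 v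
  set U := Finsupp.linearCombination 𝕜 u
  have hV : DenseRange V := by
    rw [← Submodule.dense_iff_topologicalClosure_eq_top, ← Finsupp.range_linearCombination] at hv
    exact hv
  have hUV (x : ι →₀ 𝕜) : ‖U x‖ ≤ 1 * ‖V x‖ := by
    have h := huv.2 x
    simp only [Matrix.sub_apply, mul_sub, sub_mul, Finsupp.sum_sub, finsuppSum_gram_eq_norm_sq,
      sub_nonneg] at h
    rw [one_mul]
    exact (sq_le_sq₀ (norm_nonneg _) (norm_nonneg _)).mp (by exact_mod_cast h)
  refine ⟨U.extendOfNorm V, LinearMap.opNorm_extendOfNorm_le hV zero_le_one hUV, fun i ↦ ?_⟩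
  simpa [U, V] using LinearMap.extendOfNorm_eq hV ⟨1, hUV⟩ (Finsupp.single i 1)

end PositiveSemidefinite

section HilbertSpace

variable {α 𝕜 E : Type*} [RCLike 𝕜] [NormedAddCommGroup E] [InnerProductSpace 𝕜 E] {l : Filter α}

lemma tendsto_zero_of_norm_sq_le {f : α → E} {g : α → ℝ} (hfg : ∀ᶠ a in l, ‖f a‖ ^ 2 ≤ g a)
    (hg : Tendsto g l (𝓝 0)) : Tendsto f l (𝓝 0) := by
  refine squeeze_zero_norm' (hfg.mono fun a ha ↦ Real.le_sqrt_of_sq_le ha) ?_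
  simpa using hg.sqrt

lemma tendsto_inner_zero_of_norm_le {f g : α → E} {C : ℝ} (hf : ∀ a, ‖f a‖ ≤ C)
    (hg : Tendsto g l (𝓝 0)) : Tendsto (fun a ↦ inner 𝕜 (f a) (g a)) l (𝓝 0) :=
  hg.op_zero_isBoundedUnder_le (isBoundedUnder_of ⟨C, hf⟩) (fun x y ↦ inner 𝕜 y x) fun x y ↦
    (norm_inner_le_norm y x).trans_eq (mul_comm _ _)

lemma tendsto_inner_zero_of_topologicalClosure_span_eq_top {s : Set E}
    (hs : (Submodule.span 𝕜 s).topologicalClosure = ⊤) {x : α → E} {C : ℝ}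
    (hx : ∀ a, ‖x a‖ ≤ C) (hsx : ∀ v ∈ s, Tendsto (fun a ↦ inner 𝕜 v (x a)) l (𝓝 0)) (f : E) :
    Tendsto (fun a ↦ inner 𝕜 f (x a)) l (𝓝 0) := by
  have hspan (g : E) (hg : g ∈ Submodule.span 𝕜 s) :
      Tendsto (fun a ↦ inner 𝕜 g (x a)) l (𝓝 0) := by
    induction hg using Submodule.span_induction with
    | mem v hv => exact hsx v hv
    | zero => simpa only [inner_zero_left] using tendsto_const_nhds
    | add g h _ _ hg hh => simpa only [inner_add_left, add_zero] using hg.add hh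
    | smul c g _ hg => simpa only [inner_smul_left, mul_zero] using hg.const_mul (conj c)
  rw [Metric.tendsto_nhds]
  intro ε hε
  have hC : 0 < max C 1 := lt_max_of_lt_right one_pos
  obtain ⟨g, hg, hfg⟩ := (Submodule.dense_iff_topologicalClosure_eq_top.mpr hs).exists_dist_lt f
    (by positivity : 0 < ε / 2 / max C 1)
  filter_upwards [Metric.tendsto_nhds.mp (hspan g hg) (ε / 2) (half_pos hε)] with a ha
  rw [dist_zero_right] at ha ⊢
  rw [dist_eq_norm, lt_div_iff₀ hC] at hfg
  calc ‖inner 𝕜 f (x a)‖ = ‖inner 𝕜 (f - g) (x a) + inner 𝕜 g (x a)‖ := by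
        rw [← inner_add_left, sub_add_cancel]
    _ ≤ ‖f - g‖ * max C 1 + ‖inner 𝕜 g (x a)‖ := by
        refine norm_add_le_of_le ((norm_inner_le_norm _ _).trans ?_) le_rfl
        gcongr
        exact (hx a).trans (le_max_left _ _)
    _ < ε / 2 + ε / 2 := add_lt_add hfg ha
    _ = ε := add_halves ε

lemma norm_sub_sq_le_two_mul_re_inner {x y : E} (hyx : ‖y‖ ≤ ‖x‖) :
    ‖y - x‖ ^ 2 ≤ 2 * RCLike.re (inner 𝕜 x (x - y)) := by
  rw [norm_sub_rev, norm_sub_sq (𝕜 := 𝕜), inner_sub_right, map_sub, inner_self_eq_norm_sq]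
  nlinarith [norm_nonneg y]

variable [CompleteSpace E]

lemma tendsto_zero_of_isCompactOperator {F : Type*} [NormedAddCommGroup F] [InnerProductSpace 𝕜 F]
    [CompleteSpace F] {T : E →L[𝕜] F} (hT : IsCompactOperator T) {x : α → E} {C : ℝ}
    (hx : ∀ a, ‖x a‖ ≤ C) (hweak : ∀ f, Tendsto (fun a ↦ inner 𝕜 f (x a)) l (𝓝 0)) :
    Tendsto (fun a ↦ T (x a)) l (𝓝 0) := by
  have hK := hT.isCompact_closure_image_closedBall (f := T.toLinearMap) C
  refine hK.tendsto_nhds_of_unique_mapClusterPt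
    (.of_forall fun a ↦ subset_closure ⟨x a, by simpa using hx a, rfl⟩) fun y _ hy ↦ ?_
  have hcluster : MapClusterPt (inner 𝕜 y y) l fun a ↦ inner 𝕜 y (T (x a)) :=
    hy.continuousAt_comp (f := fun z ↦ inner 𝕜 y z) (by fun_prop)
  have hlim : Tendsto (fun a ↦ inner 𝕜 y (T (x a))) l (𝓝 0) := by
    simpa only [ContinuousLinearMap.adjoint_inner_left] using hweak (T.adjoint y)
  exact inner_self_eq_zero.mp (eq_of_nhds_neBot (hcluster.clusterPt.mono hlim))

lemma norm_map_sub_smul_sq_le_of_adjoint_apply_eq {A : E →L[𝕜] E} (hA : ‖A‖ ≤ 1) {c p : 𝕜}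
    (hp : ‖p‖ = 1) {x : E} (hx : A.adjoint x = conj c • x) :
    ‖A x - p • x‖ ^ 2 ≤ 2 * ‖p - c‖ * ‖x‖ ^ 2 := by
  have hinner : inner 𝕜 (p • x) (p • x - A x) = conj p * (p - c) * inner 𝕜 x x := by
    rw [inner_smul_left, inner_sub_right, inner_smul_right, ← A.adjoint_inner_left, hx,
      inner_smul_left, RCLike.conj_conj]
    ring
  calc ‖A x - p • x‖ ^ 2 ≤ 2 * RCLike.re (inner 𝕜 (p • x) (p • x - A x)) := by
        refine norm_sub_sq_le_two_mul_re_inner ?_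
        simpa [norm_smul, hp] using A.le_of_opNorm_le hA x
    _ ≤ 2 * ‖inner 𝕜 (p • x) (p • x - A x)‖ := by gcongr; exact RCLike.re_le_norm _
    _ = 2 * ‖p - c‖ * ‖x‖ ^ 2 := by
        rw [hinner, norm_mul, norm_mul, RCLike.norm_conj, hp, one_mul, inner_self_eq_norm_sq_to_K,
          norm_pow, RCLike.norm_ofReal, abs_norm, mul_assoc]

lemma norm_adjoint_sub_conj_smul_sq_le {A : E →L[𝕜] E} (hA : ‖A‖ ≤ 1) {p : 𝕜} (hp : ‖p‖ = 1)
    (x : E) : ‖A.adjoint x - conj p • x‖ ^ 2 ≤ 2 * (‖x‖ * ‖A x - p • x‖) := by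
  have hinner : inner 𝕜 (conj p • x) (conj p • x - A.adjoint x) =
      inner 𝕜 (p • x - A x) (p • x) := by
    rw [inner_smul_left, inner_smul_right, inner_sub_right, inner_sub_left, inner_smul_right,
      inner_smul_left, A.adjoint_inner_right, RCLike.conj_conj]
  calc ‖A.adjoint x - conj p • x‖ ^ 2
      ≤ 2 * RCLike.re (inner 𝕜 (conj p • x) (conj p • x - A.adjoint x)) := by
        refine norm_sub_sq_le_two_mul_re_inner ?_
        have hA' : ‖A.adjoint‖ ≤ 1 := by simpa only [LinearIsometryEquiv.norm_map] using hA
        simpa [norm_smul, hp] using A.adjoint.le_of_opNorm_le hA' x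
    _ ≤ 2 * (‖p • x - A x‖ * ‖p • x‖) := by
        rw [hinner]; gcongr; exact re_inner_le_norm _ _
    _ = 2 * (‖x‖ * ‖A x - p • x‖) := by
        rw [norm_smul, hp, one_mul, norm_sub_rev, mul_comm ‖x‖]

lemma tendsto_inner_zero_of_approx_eigenvectors {A : E →L[𝕜] E} (hA : ‖A‖ ≤ 1) {p q : 𝕜}
    (hp : ‖p‖ = 1) (hpq : p ≠ q) {f g : α → E} {B C : ℝ} (hf : ∀ a, ‖f a‖ ≤ B)
    (hg : ∀ a, ‖g a‖ ≤ C) (hfp : Tendsto (fun a ↦ A (f a) - p • f a) l (𝓝 0))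
    (hgq : Tendsto (fun a ↦ A (g a) - q • g a) l (𝓝 0)) :
    Tendsto (fun a ↦ inner 𝕜 (f a) (g a)) l (𝓝 0) := by
  have hadj : Tendsto (fun a ↦ A.adjoint (f a) - conj p • f a) l (𝓝 0) := by
    refine tendsto_zero_of_norm_sq_le (g := fun a ↦ 2 * (B * ‖A (f a) - p • f a‖))
      (.of_forall fun a ↦ (norm_adjoint_sub_conj_smul_sq_le hA hp (f a)).trans ?_) ?_
    · gcongr
      exact hf a
    · simpa using (hfp.norm.const_mul B).const_mul 2
  have hdiff (a : α) : inner 𝕜 (f a) (g a) = (p - q)⁻¹ * (inner 𝕜 (f a) (A (g a) - q • g a) -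
      inner 𝕜 (A.adjoint (f a) - conj p • f a) (g a)) := by
    rw [eq_inv_mul_iff_mul_eq₀ (sub_ne_zero.mpr hpq), inner_sub_left, inner_sub_right,
      inner_smul_left, inner_smul_right, A.adjoint_inner_left, RCLike.conj_conj]
    ring
  have hleft := tendsto_inner_zero_of_norm_le (𝕜 := 𝕜) hf hgq
  have hright := hadj.op_zero_isBoundedUnder_le (isBoundedUnder_of ⟨C, hg⟩) (inner 𝕜)
    norm_inner_le_norm
  simpa only [hdiff, sub_zero, mul_zero] using (hleft.sub hright).const_mul (p - q)⁻¹

lemma inner_commutator_adjoint_apply (A B : E →L[𝕜] E) (f g : E) :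
    inner 𝕜 f ((B.adjoint ∘L A - A ∘L B.adjoint) g) =
      inner 𝕜 (B f) (A g) - inner 𝕜 (A.adjoint f) (B.adjoint g) := by
  rw [sub_apply, ContinuousLinearMap.comp_apply,
    ContinuousLinearMap.comp_apply, inner_sub_right, ContinuousLinearMap.adjoint_inner_right,
    ContinuousLinearMap.adjoint_inner_left]

end HilbertSpace

lemma nhdsWithin_disk_neBot {ζ : ℂ} (hζ : ‖ζ‖ = 1) : (𝓝[Disk] ζ).NeBot :=
  mem_closure_iff_nhdsWithin_neBot.mp <| by
    rw [closure_ball _ one_ne_zero, mem_closedBall_zero_iff, hζ]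

/-- The disk involution `z ↦ (a - z) / (1 - ā z)` exchanging `0` and `a`. -/
def mobius (a z : ℂ) : ℂ := (a - z) / (1 - conj a * z)

section Mobius

variable {a z w : ℂ}

lemma one_sub_norm_sq_pos (hz : z ∈ Disk) : 0 < 1 - ‖z‖ ^ 2 :=
  sub_pos.mpr (pow_lt_one₀ (norm_nonneg z) (mem_ball_zero_iff.mp hz) two_ne_zero)

lemma one_sub_conj_mul_ne_zero (ha : ‖a‖ < 1) (hz : ‖z‖ ≤ 1) : 1 - conj a * z ≠ 0 := by
  intro h
  have hnorm : ‖a‖ * ‖z‖ = 1 := by simpa using (congrArg norm (sub_eq_zero.mp h)).symm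
  nlinarith [norm_nonneg a]

lemma one_sub_mobius_mul_conj_mobius (ha : ‖a‖ < 1) (hz : ‖z‖ ≤ 1) (hw : ‖w‖ ≤ 1) :
    1 - mobius a z * conj (mobius a w) =
      (1 - ‖a‖ ^ 2) / ((1 - conj a * z) * conj (1 - conj a * w)) * (1 - z * conj w) := by
  have hz' := one_sub_conj_mul_ne_zero ha hz
  have hw' : 1 - a * conj w ≠ 0 := by
    simpa using (map_ne_zero conj).mpr (one_sub_conj_mul_ne_zero ha hw)
  simp only [mobius, ← Complex.mul_conj', map_div₀, map_sub, map_one, map_mul, Complex.conj_conj]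
  rw [mul_comm _ z] at hz' ⊢
  field_simp
  ring

lemma one_sub_norm_mobius_sq (ha : ‖a‖ < 1) (hz : ‖z‖ ≤ 1) :
    1 - ‖mobius a z‖ ^ 2 = (1 - ‖a‖ ^ 2) / ‖1 - conj a * z‖ ^ 2 * (1 - ‖z‖ ^ 2) := by
  have h := one_sub_mobius_mul_conj_mobius ha hz hz
  simp only [Complex.mul_conj'] at h
  exact_mod_cast h

lemma mobius_mem_disk (ha : a ∈ Disk) (hz : z ∈ Disk) : mobius a z ∈ Disk := by
  have ha' := mem_ball_zero_iff.mp ha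
  have hz' := (mem_ball_zero_iff.mp hz).le
  have hpos : 0 < 1 - ‖mobius a z‖ ^ 2 := by
    rw [one_sub_norm_mobius_sq ha' hz']
    exact mul_pos (div_pos (one_sub_norm_sq_pos ha)
      (pow_pos (norm_pos_iff.mpr (one_sub_conj_mul_ne_zero ha' hz')) 2)) (one_sub_norm_sq_pos hz)
  rw [mem_ball_zero_iff]
  exact (sq_lt_one_iff₀ (norm_nonneg _)).mp (sub_pos.mp hpos)

lemma norm_mobius_eq_one (ha : a ∈ Disk) (hz : ‖z‖ = 1) : ‖mobius a z‖ = 1 := by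
  have h := one_sub_norm_mobius_sq (mem_ball_zero_iff.mp ha) hz.le
  rw [hz, one_pow, sub_self, mul_zero, sub_eq_zero, eq_comm] at h
  exact (pow_eq_one_iff_of_nonneg (norm_nonneg _) two_ne_zero).mp h

lemma differentiableOn_mobius (ha : a ∈ Disk) :
    DifferentiableOn ℂ (mobius a) (closedBall 0 1) := by
  unfold mobius
  refine DifferentiableOn.div (by fun_prop) (by fun_prop) fun z hz ↦ ?_
  exact one_sub_conj_mul_ne_zero (mem_ball_zero_iff.mp ha) (mem_closedBall_zero_iff.mp hz)

lemma mobius_mobius (ha : a ∈ Disk) (hz : z ∈ Disk) : mobius a (mobius a z) = z := by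
  have hm := mem_ball_zero_iff.mp (mobius_mem_disk ha hz)
  rw [mem_ball_zero_iff] at ha hz
  have hz' := one_sub_conj_mul_ne_zero ha hz.le
  rw [mobius, div_eq_iff (one_sub_conj_mul_ne_zero ha hm.le), mobius]
  rw [mul_comm _ z] at hz' ⊢
  field_simp
  ring

lemma isDiskAutomorphism_mobius (ha : a ∈ Disk) : IsDiskAutomorphism (mobius a) := by
  have hdiff := (differentiableOn_mobius ha).mono ball_subset_closedBall
  exact ⟨hdiff, fun _ ↦ mobius_mem_disk ha, mobius a, hdiff, fun _ ↦ mobius_mem_disk ha,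
    fun _ ↦ mobius_mobius ha, fun _ ↦ mobius_mobius ha⟩

end Mobius

namespace IsDiskAutomorphism

variable {φ ψ : ℂ → ℂ}

lemma mapsTo (hφ : IsDiskAutomorphism φ) : MapsTo φ Disk Disk := hφ.2.1

protected lemma id : IsDiskAutomorphism id :=
  ⟨differentiableOn_id, mapsTo_id _, id, differentiableOn_id, mapsTo_id _,
    fun _ _ ↦ rfl, fun _ _ ↦ rfl⟩

lemma exists_inverse (hφ : IsDiskAutomorphism φ) :
    ∃ χ, IsDiskAutomorphism χ ∧ InvOn χ φ Disk Disk := by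
  obtain ⟨hφd, hφm, χ, hχd, hχm, hχφ, hφχ⟩ := hφ
  exact ⟨χ, ⟨hχd, hχm, φ, hφd, hφm, hφχ, hχφ⟩, hχφ, hφχ⟩

protected lemma comp (hφ : IsDiskAutomorphism φ) (hψ : IsDiskAutomorphism ψ) :
    IsDiskAutomorphism (φ ∘ ψ) := by
  obtain ⟨χ, hχ, hχφ⟩ := hφ.exists_inverse
  obtain ⟨η, hη, hηψ⟩ := hψ.exists_inverse
  have hinv : InvOn (η ∘ χ) (φ ∘ ψ) Disk Disk := hηψ.comp hχφ hψ.mapsTo hχ.mapsTo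
  exact ⟨hφ.1.comp hψ.1 hψ.mapsTo, hφ.mapsTo.comp hψ.mapsTo, η ∘ χ,
    hη.1.comp hχ.1 hχ.mapsTo, hη.mapsTo.comp hχ.mapsTo, hinv.1, hinv.2⟩

lemma exists_eqOn_mul_of_map_zero (hφ : IsDiskAutomorphism φ) (h0 : φ 0 = 0) :
    ∃ c : ℂ, ‖c‖ = 1 ∧ EqOn φ (c * ·) Disk := by
  obtain ⟨χ, hχ, hχφ, -⟩ := hφ.exists_inverse
  have hχ0 : χ 0 = 0 := by simpa only [h0] using hχφ (mem_ball_self one_pos)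
  have hhalf : (1 / 2 : ℂ) ∈ Disk := by rw [mem_ball_zero_iff]; norm_num
  have hnorm : ‖φ (1 / 2)‖ = ‖(1 / 2 : ℂ)‖ := by
    refine le_antisymm ?_ ?_
    · exact Complex.norm_le_norm_of_mapsTo_ball hφ.1 (hφ.mapsTo.mono_right ball_subset_closedBall)
        h0 (mem_ball_zero_iff.mp hhalf)
    · simpa only [hχφ hhalf] using Complex.norm_le_norm_of_mapsTo_ball hχ.1
        (hχ.mapsTo.mono_right ball_subset_closedBall) hχ0
        (mem_ball_zero_iff.mp (hφ.mapsTo hhalf))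
  have hslope : ‖dslope φ 0 (1 / 2)‖ = 1 / 1 := by
    rw [dslope_of_ne _ (by norm_num), slope_def_field, h0, sub_zero, sub_zero, norm_div, hnorm,
      div_self (by norm_num), div_one]
  obtain ⟨c, hc, hφc⟩ := Complex.affine_of_mapsTo_ball_of_exists_norm_dslope_eq_div' hφ.1
    (by simpa only [h0] using hφ.mapsTo.mono_right ball_subset_closedBall) ⟨_, hhalf, hslope⟩
  refine ⟨c, by simpa using hc, fun z hz ↦ ?_⟩
  simpa [h0, mul_comm] using hφc hz

lemma exists_eqOn_mul_mobius (hφ : IsDiskAutomorphism φ) :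
    ∃ a ∈ Disk, ∃ c : ℂ, ‖c‖ = 1 ∧ EqOn φ (fun z ↦ c * mobius a z) Disk := by
  obtain ⟨χ, hχ, -, hφχ⟩ := hφ.exists_inverse
  have h0 : (0 : ℂ) ∈ Disk := mem_ball_self one_pos
  have ha := hχ.mapsTo h0
  obtain ⟨c, hc, hφc⟩ := (hφ.comp (isDiskAutomorphism_mobius ha)).exists_eqOn_mul_of_map_zero
    (by simp [mobius, hφχ h0])
  refine ⟨χ 0, ha, c, hc, fun z hz ↦ ?_⟩
  simpa only [Function.comp_apply, mobius_mobius ha hz] using hφc (mobius_mem_disk ha hz)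

lemma exists_one_sub_mul_conj_eq (hφ : IsDiskAutomorphism φ) :
    ∃ h : ℂ → ℂ, ∀ z ∈ Disk, ∀ w ∈ Disk,
      1 - φ z * conj (φ w) = h z * conj (h w) * (1 - z * conj w) := by
  obtain ⟨a, ha, c, hc, hφc⟩ := hφ.exists_eqOn_mul_mobius
  rw [mem_ball_zero_iff] at ha
  have hsqrt : (√(1 - ‖a‖ ^ 2) : ℂ) * √(1 - ‖a‖ ^ 2) = 1 - ‖a‖ ^ 2 := by
    exact_mod_cast Real.mul_self_sqrt
      (sub_nonneg.mpr (pow_le_one₀ (norm_nonneg a) ha.le))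
  refine ⟨fun z ↦ √(1 - ‖a‖ ^ 2) / (1 - conj a * z), fun z hz w hw ↦ ?_⟩
  calc 1 - φ z * conj (φ w) = 1 - c * conj c * (mobius a z * conj (mobius a w)) := by
        rw [hφc hz, hφc hw, map_mul]
        ring
    _ = 1 - mobius a z * conj (mobius a w) := by
        rw [Complex.mul_conj', hc, Complex.ofReal_one, one_pow, one_mul]
    _ = _ := by
        rw [one_sub_mobius_mul_conj_mobius ha (mem_ball_zero_iff.mp hz).le
          (mem_ball_zero_iff.mp hw).le, map_div₀, Complex.conj_ofReal, div_mul_div_comm, hsqrt]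

lemma exists_one_sub_norm_sq_le (hφ : IsDiskAutomorphism φ) :
    ∃ B > 0, ∀ z ∈ Disk, 1 - ‖φ z‖ ^ 2 ≤ B * (1 - ‖z‖ ^ 2) := by
  obtain ⟨a, ha, c, hc, hφc⟩ := hφ.exists_eqOn_mul_mobius
  rw [mem_ball_zero_iff] at ha
  refine ⟨1 / (1 - ‖a‖) ^ 2, one_div_pos.mpr (pow_pos (sub_pos.mpr ha) 2), fun z hz ↦ ?_⟩
  have hz' := mem_ball_zero_iff.mp hz
  have hden : 1 - ‖a‖ ≤ ‖1 - conj a * z‖ := by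
    have h := norm_sub_norm_le (1 : ℂ) (conj a * z)
    rw [norm_one, norm_mul, RCLike.norm_conj] at h
    nlinarith [norm_nonneg a]
  rw [hφc hz, norm_mul, hc, one_mul, one_sub_norm_mobius_sq ha hz'.le]
  have hza : 0 ≤ 1 - ‖z‖ ^ 2 := sub_nonneg.mpr (pow_le_one₀ (norm_nonneg z) hz'.le)
  have := sub_pos.mpr ha
  gcongr
  exact sub_le_self _ (sq_nonneg _)

lemma exists_diffContOnCl_eqOn (hφ : IsDiskAutomorphism φ) :
    ∃ m : ℂ → ℂ, DiffContOnCl ℂ m Disk ∧ EqOn φ m Disk ∧ ∀ z, ‖z‖ = 1 → ‖m z‖ = 1 := by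
  obtain ⟨a, ha, c, hc, hφc⟩ := hφ.exists_eqOn_mul_mobius
  refine ⟨_, DifferentiableOn.diffContOnCl ?_, hφc, fun z hz ↦ ?_⟩
  · rw [closure_ball _ one_ne_zero]
    exact (differentiableOn_mobius ha).const_mul c
  · rw [norm_mul, hc, norm_mobius_eq_one ha hz, one_mul]

lemma exists_tendsto_ne (hφ : IsDiskAutomorphism φ) (hψ : IsDiskAutomorphism ψ)
    (hne : ¬ EqOn φ ψ Disk) :
    ∃ ζ p q : ℂ, ‖ζ‖ = 1 ∧ ‖p‖ = 1 ∧ ‖q‖ = 1 ∧ p ≠ q ∧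
      Tendsto φ (𝓝[Disk] ζ) (𝓝 p) ∧ Tendsto ψ (𝓝[Disk] ζ) (𝓝 q) := by
  obtain ⟨m, hm, hφm, hm1⟩ := hφ.exists_diffContOnCl_eqOn
  obtain ⟨n, hn, hψn, hn1⟩ := hψ.exists_diffContOnCl_eqOn
  obtain ⟨ζ, hζ, hmn⟩ : ∃ ζ ∈ frontier Disk, m ζ ≠ n ζ := by
    by_contra! h
    exact hne <| hφm.trans <| (Complex.eqOn_of_eqOn_frontier isBounded_ball hm hn h).trans hψn.symm
  have hlim {f g : ℂ → ℂ} (hg : DiffContOnCl ℂ g Disk) (hfg : EqOn f g Disk) :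
      Tendsto f (𝓝[Disk] ζ) (𝓝 (g ζ)) :=
    ((hg.continuousOn ζ (frontier_subset_closure hζ)).mono subset_closure).congr'
      (hfg.symm.eventuallyEq_nhdsWithin)
  rw [frontier_ball _ one_ne_zero, mem_sphere_zero_iff_norm] at hζ
  exact ⟨ζ, m ζ, n ζ, hζ, hm1 ζ hζ, hn1 ζ hζ, hmn, hlim hm hφm, hlim hn hψn⟩

end IsDiskAutomorphism

section PowerKernel

lemma multichoose_nonneg {r : ℝ} (hr : 0 ≤ r) (n : ℕ) : 0 ≤ Ring.multichoose r n := by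
  have hpoch : 0 ≤ (ascPochhammer ℝ n).eval r := by
    induction n with
    | zero => simp
    | succ n ih =>
      rw [ascPochhammer_succ_eval]
      positivity
  rw [← Polynomial.ascPochhammer_smeval_eq_eval,
    ← Ring.factorial_nsmul_multichoose_eq_ascPochhammer, nsmul_eq_mul] at hpoch
  exact nonneg_of_mul_nonneg_right hpoch (by positivity)

lemma hasSum_multichoose_mul_pow (r : ℝ) {x : ℂ} (hx : ‖x‖ < 1) :
    HasSum (fun n ↦ ((Ring.multichoose r n : ℝ) : ℂ) * x ^ n) ((1 - x) ^ (-r : ℂ)) := by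
  have h := (Complex.one_div_one_sub_cpow_hasFPowerSeriesOnBall_zero r).hasSum (y := x)
    (by simpa [← ENNReal.ofReal_one, Metric.eball_ofReal] using hx)
  simp only [zero_add, one_div, ← Complex.cpow_neg] at h
  convert! h using 2 with n
  simp [FormalMultilinearSeries.ofScalars, Complex.ofReal_choose, Ring.multichoose_eq, mul_comm]

open scoped ComplexOrder in
lemma posSemidef_one_sub_mul_conj_cpow_neg {r : ℝ} (hr : 0 ≤ r) :
    (Matrix.of fun z w : Disk ↦ (1 - (z : ℂ) * conj (w : ℂ)) ^ (-r : ℂ)).PosSemidef := by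
  refine posSemidef_of_hasSum
    (A := fun n ↦ ((Ring.multichoose r n : ℝ) : ℂ) •
      Matrix.of fun z w : Disk ↦ (z : ℂ) ^ n * conj ((w : ℂ) ^ n))
    (fun n ↦ (posSemidef_mul_conj _).smul (by exact_mod_cast multichoose_nonneg hr n))
    fun z w ↦ ?_
  have hzw : ‖(z : ℂ) * conj (w : ℂ)‖ < 1 := by
    rw [norm_mul, RCLike.norm_conj]
    exact mul_lt_one_of_nonneg_of_lt_one_left (norm_nonneg _) (mem_ball_zero_iff.mp z.2)
      (mem_ball_zero_iff.mp w.2).le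
  simpa [mul_pow] using hasSum_multichoose_mul_pow r hzw

end PowerKernel

namespace DiskKernelSpace

variable {t : ℝ} {S : DiskKernelSpace t} {φ χ : ℂ → ℂ} {z w : ℂ}

lemma inner_kernel_kernel (S : DiskKernelSpace t) (hz : z ∈ Disk) (hw : w ∈ Disk) :
    ⟪S.kernel z, S.kernel w⟫ = (1 - z * conj w) ^ (-(t : ℂ)) := by
  rw [S.reproducing _ z hz, S.eval_kernel w hw z hz]

lemma norm_kernel_sq (S : DiskKernelSpace t) (hw : w ∈ Disk) :
    ‖S.kernel w‖ ^ 2 = (1 - ‖w‖ ^ 2) ^ (-t) := by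
  have h := inner_self_eq_norm_sq_to_K (𝕜 := ℂ) (S.kernel w)
  rw [inner_kernel_kernel S hw hw, Complex.mul_conj'] at h
  apply Complex.ofReal_injective
  rw [Complex.ofReal_cpow (one_sub_norm_sq_pos hw).le]
  push_cast
  exact h.symm

lemma norm_kernel_pos (S : DiskKernelSpace t) (hw : w ∈ Disk) : 0 < ‖S.kernel w‖ := by
  have hsq : 0 < ‖S.kernel w‖ ^ 2 := by
    rw [norm_kernel_sq S hw]
    exact Real.rpow_pos_of_pos (one_sub_norm_sq_pos hw) _
  exact (norm_nonneg _).lt_of_ne' (sq_pos_iff.mp hsq)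

lemma topologicalClosure_span_kernel (S : DiskKernelSpace t) :
    (Submodule.span ℂ (range fun w : Disk ↦ S.kernel w)).topologicalClosure = ⊤ := by
  rw [Submodule.topologicalClosure_eq_top_iff, Submodule.eq_bot_iff]
  refine fun f hf ↦ S.eval_injective f 0 fun z hz ↦ ?_
  rw [← S.reproducing f z hz, ← S.reproducing 0 z hz, inner_zero_right]
  exact (Submodule.mem_orthogonal _ f).mp hf _ (Submodule.subset_span ⟨⟨z, hz⟩, rfl⟩)

lemma exists_mul_norm_kernel_le (S : DiskKernelSpace t) (ht : 0 ≤ t) (hφ : IsDiskAutomorphism φ) :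
    ∃ c > 0, ∀ w ∈ Disk, c * ‖S.kernel w‖ ≤ ‖S.kernel (φ w)‖ := by
  obtain ⟨B, hB, hφB⟩ := hφ.exists_one_sub_norm_sq_le
  refine ⟨√(B ^ (-t)), by positivity, fun w hw ↦ ?_⟩
  rw [← sq_le_sq₀ (by positivity) (norm_nonneg _), mul_pow, Real.sq_sqrt (by positivity),
    norm_kernel_sq S hw, norm_kernel_sq S (hφ.mapsTo hw),
    ← Real.mul_rpow hB.le (one_sub_norm_sq_pos hw).le]
  exact Real.rpow_le_rpow_of_nonpos (one_sub_norm_sq_pos (hφ.mapsTo hw)) (hφB w hw)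
    (neg_nonpos.mpr ht)

lemma IsCompositionOperator.adjoint_kernel {C : S.H →L[ℂ] S.H} (hC : S.IsCompositionOperator φ C)
    (hφ : MapsTo φ Disk Disk) (hw : w ∈ Disk) : C.adjoint (S.kernel w) = S.kernel (φ w) := by
  refine ext_inner_right ℂ fun f ↦ ?_
  rw [C.adjoint_inner_left, S.reproducing _ w hw, S.reproducing f _ (hφ hw), hC f w hw]

/-- `M` is the multiplication operator `f ↦ χ f` on `S`. -/
def IsMultiplicationOperator (S : DiskKernelSpace t) (χ : ℂ → ℂ) (M : S.H →L[ℂ] S.H) : Prop :=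
  ∀ f : S.H, ∀ z ∈ Disk, S.eval (M f) z = χ z * S.eval f z

lemma IsMultiplicationOperator.adjoint_kernel {M : S.H →L[ℂ] S.H}
    (hM : S.IsMultiplicationOperator χ M) (hw : w ∈ Disk) :
    M.adjoint (S.kernel w) = conj (χ w) • S.kernel w := by
  refine ext_inner_right ℂ fun f ↦ ?_
  rw [M.adjoint_inner_left, S.reproducing _ w hw, hM f w hw, inner_smul_left, Complex.conj_conj,
    S.reproducing f w hw]

lemma IsMultiplicationOperator.apply_comp {μ : ℂ → ℂ} {M L C : S.H →L[ℂ] S.H}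
    (hM : S.IsMultiplicationOperator μ M) (hL : S.IsMultiplicationOperator χ L)
    (hC : S.IsCompositionOperator φ C) (hφ : MapsTo φ Disk Disk) (hμ : EqOn (χ ∘ φ) μ Disk)
    (f : S.H) : M (C f) = C (L f) := by
  refine S.eval_injective _ _ fun z hz ↦ ?_
  rw [hM _ z hz, hC _ z hz, hC _ z hz, hL _ _ (hφ hz), ← hμ hz, Function.comp_apply]

open scoped ComplexOrder in
lemma exists_isMultiplicationOperator_of_posSemidef (S : DiskKernelSpace t)
    (hχ : (Matrix.of fun z w : Disk ↦
      (1 - χ z * conj (χ w)) * ⟪S.kernel z, S.kernel w⟫).PosSemidef) :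
    ∃ M : S.H →L[ℂ] S.H, ‖M‖ ≤ 1 ∧ S.IsMultiplicationOperator χ M := by
  obtain ⟨A, hA, hAk⟩ := exists_contraction_of_posSemidef_gram_sub (𝕜 := ℂ)
    (u := fun w : Disk ↦ conj (χ w) • S.kernel w) S.topologicalClosure_span_kernel (by
      convert! hχ using 1
      ext z w
      simp only [Matrix.sub_apply, Matrix.gram_apply, inner_smul_left, inner_smul_right,
        Complex.conj_conj, Matrix.of_apply]
      ring)
  refine ⟨A.adjoint, by simpa only [LinearIsometryEquiv.norm_map] using hA, fun f z hz ↦ ?_⟩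
  rw [← S.reproducing _ z hz, A.adjoint_inner_right, hAk ⟨z, hz⟩, inner_smul_left,
    Complex.conj_conj, S.reproducing f z hz]

lemma exists_isMultiplicationOperator (S : DiskKernelSpace t) (ht : 1 ≤ t)
    (hχ : IsDiskAutomorphism χ) :
    ∃ M : S.H →L[ℂ] S.H, ‖M‖ ≤ 1 ∧ S.IsMultiplicationOperator χ M := by
  obtain ⟨h, hh⟩ := hχ.exists_one_sub_mul_conj_eq
  refine S.exists_isMultiplicationOperator_of_posSemidef ?_
  -- By Schwarz–Pick, `(1 - χ(z) conj χ(w)) ⟪K_z, K_w⟫` is the Schur product of the rank-one kernel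
  -- `h(z) conj h(w)` with `(1 - z conj w)^{-(t - 1)}`.
  convert! (posSemidef_mul_conj fun z : Disk ↦ h z).hadamard
    (posSemidef_one_sub_mul_conj_cpow_neg (sub_nonneg.mpr ht)) using 1
  ext z w
  have hne : 1 - (z : ℂ) * conj (w : ℂ) ≠ 0 := by
    rw [mul_comm]
    exact one_sub_conj_mul_ne_zero (mem_ball_zero_iff.mp w.2) (mem_ball_zero_iff.mp z.2).le
  have hexp : (-(t - 1 : ℝ) : ℂ) = 1 + -(t : ℂ) := by push_cast; ring
  rw [Matrix.hadamard_apply, Matrix.of_apply, Matrix.of_apply, Matrix.of_apply,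
    inner_kernel_kernel S z.2 w.2, hh z z.2 w w.2, hexp, Complex.cpow_add _ _ hne,
    Complex.cpow_one, mul_assoc]

/-- The normalized reproducing kernel `k_w = K_w / ‖K_w‖`; a unit vector for `w ∈ D`. -/
def normalizedKernel (S : DiskKernelSpace t) (w : ℂ) : S.H :=
  (‖S.kernel w‖ : ℂ)⁻¹ • S.kernel w

lemma norm_normalizedKernel_le_one (S : DiskKernelSpace t) (w : ℂ) :
    ‖S.normalizedKernel w‖ ≤ 1 := by
  rw [normalizedKernel, norm_smul, norm_inv, Complex.norm_real, norm_norm]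
  exact inv_mul_le_one

lemma tendsto_inv_norm_kernel (S : DiskKernelSpace t) (ht : 0 < t) {ζ : ℂ} (hζ : ‖ζ‖ = 1) :
    Tendsto (fun w ↦ ‖S.kernel w‖⁻¹) (𝓝[Disk] ζ) (𝓝 0) := by
  refine tendsto_zero_of_norm_sq_le (g := fun w ↦ (1 - ‖w‖ ^ 2) ^ t) ?_ ?_
  · filter_upwards [self_mem_nhdsWithin] with w hw
    rw [norm_inv, norm_norm, inv_pow, norm_kernel_sq S hw,
      Real.rpow_neg (one_sub_norm_sq_pos hw).le, inv_inv]
  · have hcont : ContinuousAt (fun w : ℂ ↦ (1 - ‖w‖ ^ 2) ^ t) ζ :=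
      ContinuousAt.rpow_const (by fun_prop) (Or.inr ht.le)
    simpa [hζ, Real.zero_rpow ht.ne'] using hcont.tendsto.mono_left nhdsWithin_le_nhds

lemma tendsto_inner_normalizedKernel (S : DiskKernelSpace t) (ht : 0 < t) {ζ : ℂ} (hζ : ‖ζ‖ = 1)
    (f : S.H) : Tendsto (fun w ↦ ⟪f, S.normalizedKernel w⟫) (𝓝[Disk] ζ) (𝓝 0) := by
  refine tendsto_inner_zero_of_topologicalClosure_span_eq_top S.topologicalClosure_span_kernel
    S.norm_normalizedKernel_le_one ?_ f
  rintro _ ⟨⟨z, hz⟩, rfl⟩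
  have hslit : 1 - z * conj ζ ∈ Complex.slitPlane := by
    refine Complex.mem_slitPlane_of_norm_lt_one (z := -(z * conj ζ)) ?_
    rwa [norm_neg, norm_mul, RCLike.norm_conj, hζ, mul_one, ← mem_ball_zero_iff]
  have hcont : ContinuousAt (fun w ↦ (1 - z * conj w) ^ (-(t : ℂ))) ζ :=
    ContinuousAt.cpow (by fun_prop) continuousAt_const hslit
  have hlim := ((Complex.continuous_ofReal.tendsto 0).comp (S.tendsto_inv_norm_kernel ht hζ)).mul
    (hcont.tendsto.mono_left nhdsWithin_le_nhds)
  rw [Complex.ofReal_zero, zero_mul] at hlim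
  refine hlim.congr' ?_
  filter_upwards [self_mem_nhdsWithin] with w hw
  rw [normalizedKernel, inner_smul_right, inner_kernel_kernel S hz hw, Function.comp_apply,
    Complex.ofReal_inv]

section Asymptotics

variable {α : Type*} {l : Filter α} {u v : α → ℂ} {p q : ℂ}

lemma IsMultiplicationOperator.tendsto_sub_smul_normalizedKernel {M : S.H →L[ℂ] S.H}
    (hM : S.IsMultiplicationOperator χ M) (hM1 : ‖M‖ ≤ 1) (hu : ∀ᶠ a in l, u a ∈ Disk)
    (hp : ‖p‖ = 1) (hup : Tendsto (χ ∘ u) l (𝓝 p)) :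
    Tendsto (fun a ↦ M (S.normalizedKernel (u a)) - p • S.normalizedKernel (u a)) l (𝓝 0) := by
  refine tendsto_zero_of_norm_sq_le (g := fun a ↦ 2 * ‖p - χ (u a)‖) (hu.mono fun a ha ↦ ?_) ?_
  · have heigen : M.adjoint (S.normalizedKernel (u a)) =
        conj (χ (u a)) • S.normalizedKernel (u a) := by
      rw [normalizedKernel, map_smul, hM.adjoint_kernel ha, smul_comm]
    refine (norm_map_sub_smul_sq_le_of_adjoint_apply_eq hM1 hp heigen).trans ?_
    exact mul_le_of_le_one_right (by positivity)
      (pow_le_one₀ (norm_nonneg _) (S.norm_normalizedKernel_le_one _))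
  · simpa using (hup.const_sub p).norm.const_mul 2

lemma IsCompositionOperator.tendsto_sub_smul_normalizedKernel (ht : 1 ≤ t)
    (hφ : MapsTo φ Disk Disk) (hχ : IsDiskAutomorphism χ) (hχφ : LeftInvOn χ φ Disk)
    {C M : S.H →L[ℂ] S.H} (hC : S.IsCompositionOperator φ C)
    (hM : S.IsMultiplicationOperator id M) (hu : ∀ᶠ a in l, u a ∈ Disk) (hp : ‖p‖ = 1)
    (hup : Tendsto (χ ∘ u) l (𝓝 p)) :
    Tendsto (fun a ↦ M (C (S.normalizedKernel (u a))) - p • C (S.normalizedKernel (u a))) l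
      (𝓝 0) := by
  obtain ⟨L, hL1, hL⟩ := S.exists_isMultiplicationOperator ht hχ
  have hlim := (C.continuous.tendsto 0).comp
    (hL.tendsto_sub_smul_normalizedKernel hL1 hu hp hup)
  simpa only [Function.comp_def, map_sub, map_smul, map_zero, hM.apply_comp hL hC hφ hχφ] using hlim

lemma tendsto_inner_compositionOperator_normalizedKernel (ht : 1 ≤ t) {ψ η : ℂ → ℂ}
    (hφ : MapsTo φ Disk Disk) (hχ : IsDiskAutomorphism χ) (hχφ : LeftInvOn χ φ Disk)
    (hψ : MapsTo ψ Disk Disk) (hη : IsDiskAutomorphism η) (hηψ : LeftInvOn η ψ Disk)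
    {A B : S.H →L[ℂ] S.H} (hA : S.IsCompositionOperator φ A) (hB : S.IsCompositionOperator ψ B)
    (hu : ∀ᶠ a in l, u a ∈ Disk) (hv : ∀ᶠ a in l, v a ∈ Disk) (hp : ‖p‖ = 1) (hq : ‖q‖ = 1)
    (hpq : p ≠ q) (hup : Tendsto (χ ∘ u) l (𝓝 p)) (hvq : Tendsto (η ∘ v) l (𝓝 q)) :
    Tendsto (fun a ↦ ⟪A (S.normalizedKernel (u a)), B (S.normalizedKernel (v a))⟫) l (𝓝 0) := by
  obtain ⟨M, hM1, hM⟩ := S.exists_isMultiplicationOperator ht .id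
  have hbound (T : S.H →L[ℂ] S.H) (w : ℂ) : ‖T (S.normalizedKernel w)‖ ≤ ‖T‖ :=
    T.unit_le_opNorm _ (S.norm_normalizedKernel_le_one w)
  exact tendsto_inner_zero_of_approx_eigenvectors hM1 hp hpq (fun a ↦ hbound A (u a))
    (fun a ↦ hbound B (v a)) (hA.tendsto_sub_smul_normalizedKernel ht hφ hχ hχφ hM hu hp hup)
    (hB.tendsto_sub_smul_normalizedKernel ht hψ hη hηψ hM hv hq hvq)

end Asymptotics

lemma IsCompositionOperator.exists_le_norm_inner_adjoint (ht : 0 ≤ t) {ψ : ℂ → ℂ}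
    (hφ : IsDiskAutomorphism φ) (hψ : IsDiskAutomorphism ψ) {A B : S.H →L[ℂ] S.H}
    (hA : S.IsCompositionOperator φ A) (hB : S.IsCompositionOperator ψ B) :
    ∃ c > 0, ∀ z ∈ Disk, ∀ w ∈ Disk, φ z = ψ w →
      c ≤ ‖⟪A.adjoint (S.normalizedKernel z), B.adjoint (S.normalizedKernel w)⟫‖ := by
  obtain ⟨c, hc, hφc⟩ := S.exists_mul_norm_kernel_le ht hφ
  obtain ⟨d, hd, hψd⟩ := S.exists_mul_norm_kernel_le ht hψ
  refine ⟨c * d, mul_pos hc hd, fun z hz w hw hzw ↦ ?_⟩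
  have hinner : ‖⟪A.adjoint (S.normalizedKernel z), B.adjoint (S.normalizedKernel w)⟫‖ =
      ‖S.kernel (φ z)‖ / ‖S.kernel z‖ * (‖S.kernel (ψ w)‖ / ‖S.kernel w‖) := by
    rw [normalizedKernel, normalizedKernel, map_smul, map_smul, hA.adjoint_kernel hφ.mapsTo hz,
      hB.adjoint_kernel hψ.mapsTo hw, hzw, inner_smul_left, inner_smul_right,
      inner_self_eq_norm_sq_to_K]
    simp only [norm_mul, norm_pow, norm_inv, RCLike.norm_conj, RCLike.norm_ofReal,
      Complex.norm_real, abs_norm, norm_norm]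
    ring
  rw [hinner]
  gcongr
  · exact (le_div_iff₀ (S.norm_kernel_pos hz)).mpr (hφc z hz)
  · exact (le_div_iff₀ (S.norm_kernel_pos hw)).mpr (hψd w hw)

lemma tendsto_inner_adjoint_normalizedKernel (ht : 0 < t) {A B : S.H →L[ℂ] S.H}
    (hAB : IsCompactOperator (B.adjoint ∘L A - A ∘L B.adjoint)) {ζ : ℂ} (hζ : ‖ζ‖ = 1) {v : ℂ → ℂ}
    (horth : Tendsto (fun w ↦ ⟪B (S.normalizedKernel (v w)), A (S.normalizedKernel w)⟫)
      (𝓝[Disk] ζ) (𝓝 0)) :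
    Tendsto (fun w ↦ ⟪A.adjoint (S.normalizedKernel (v w)), B.adjoint (S.normalizedKernel w)⟫)
      (𝓝[Disk] ζ) (𝓝 0) := by
  have hcompact := tendsto_zero_of_isCompactOperator hAB S.norm_normalizedKernel_le_one
    (S.tendsto_inner_normalizedKernel ht hζ)
  have hcommutator := tendsto_inner_zero_of_norm_le (𝕜 := ℂ)
    (fun w ↦ S.norm_normalizedKernel_le_one (v w)) hcompact
  simpa only [inner_commutator_adjoint_apply, sub_sub_cancel, sub_zero] using
    horth.sub hcommutator

end DiskKernelSpace

lemma eqOn_comp_of_eqOn_inverse {X : Type*} {s : Set X} {φ ψ χ η : X → X}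
    (hφ : MapsTo φ s s) (hψ : MapsTo ψ s s) (hχ : MapsTo χ s s) (hχφ : InvOn χ φ s s)
    (hηψ : InvOn η ψ s s) (h : EqOn χ (η ∘ χ ∘ ψ) s) : EqOn (φ ∘ ψ) (ψ ∘ φ) s := by
  intro z hz
  have hψφ := hψ (hφ hz)
  calc φ (ψ z) = φ (ψ (χ (φ z))) := by rw [hχφ.1 hz]
    _ = φ (ψ (η (χ (ψ (φ z))))) := by rw [h (hφ hz), Function.comp_apply, Function.comp_apply]
    _ = ψ (φ z) := by rw [hηψ.2 (hχ hψφ), hχφ.2 hψφ]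

/-- Let `φ, ψ` be automorphisms of the unit disk `D`.  If the commutator
`[C_ψ*, C_φ] = C_ψ* C_φ - C_φ C_ψ*` is compact on the Hardy space `H²(D)` (`t = 1`) or on a
weighted Bergman space `A²_s(D)` (`t = s + 2` for some `s > -1`), then `φ ∘ ψ = ψ ∘ φ`. -/
theorem commute_of_commutator_compact_disk
    (t : ℝ) (ht : t = 1 ∨ ∃ s : ℝ, -1 < s ∧ t = s + 2)
    (S : DiskKernelSpace t)
    (φ ψ : ℂ → ℂ)
    (hφ : IsDiskAutomorphism φ) (hψ : IsDiskAutomorphism ψ)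
    (Cφ Cψ : S.H →L[ℂ] S.H)
    (hCφ : S.IsCompositionOperator φ Cφ) (hCψ : S.IsCompositionOperator ψ Cψ)
    (hcpt : IsCompactOperator
      ⇑((ContinuousLinearMap.adjoint Cψ).comp Cφ - Cφ.comp (ContinuousLinearMap.adjoint Cψ))) :
    ∀ z ∈ Disk, φ (ψ z) = ψ (φ z) := by
  have ht' : 1 ≤ t := by rcases ht with rfl | ⟨s, hs, rfl⟩ <;> linarith
  obtain ⟨χ, hχ, hχφ⟩ := hφ.exists_inverse
  obtain ⟨η, hη, hηψ⟩ := hψ.exists_inverse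
  by_contra hcomm
  have hne : ¬ EqOn (η ∘ χ ∘ ψ) χ Disk := fun h ↦ hcomm <|
    eqOn_comp_of_eqOn_inverse hφ.mapsTo hψ.mapsTo hχ.mapsTo hχφ hηψ h.symm
  obtain ⟨ζ, p, q, hζ, hp, hq, hpq, hηp, hχq⟩ :=
    (hη.comp (hχ.comp hψ)).exists_tendsto_ne hχ hne
  have hw : ∀ᶠ w in 𝓝[Disk] ζ, w ∈ Disk := self_mem_nhdsWithin
  have hv : ∀ᶠ w in 𝓝[Disk] ζ, χ (ψ w) ∈ Disk := hw.mono fun w hw ↦ hχ.mapsTo (hψ.mapsTo hw)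
  have horth := DiskKernelSpace.tendsto_inner_compositionOperator_normalizedKernel ht' hψ.mapsTo hη
    hηψ.1 hφ.mapsTo hχ hχφ.1 hCψ hCφ hv hw hp hq hpq hηp hχq
  have hadjoint := DiskKernelSpace.tendsto_inner_adjoint_normalizedKernel
    (zero_lt_one.trans_le ht') hcpt hζ horth
  obtain ⟨c, hc, hlower⟩ := hCφ.exists_le_norm_inner_adjoint (zero_le_one.trans ht') hφ hψ hCψ
  have := nhdsWithin_disk_neBot hζ
  have hle : c ≤ ‖(0 : ℂ)‖ := ge_of_tendsto hadjoint.norm <| by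
    filter_upwards [hw, hv] with w hw hv
    exact hlower _ hv w hw (hχφ.2 (hψ.mapsTo hw))
  exact hc.not_ge (by simpa only [norm_zero] using hle)
end
end
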